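/- Every connected simple graph G on at most 8 vertices with at least one edge satisfies φ₂(G) = φ₂(χ(G)); that is, for connectivity graphs with at most eight vertices, the graph-colouring construction for two-body partial tomography always yields a minimal Pauli set. -/

import Mathlib

/-- A Pauli set for a simple graph `G`: a finite set `S` of assignments of a Pauli
operator (an element of `Fin 3`) to each vertex, such that for every edge `{i, j}`
of `G` and every pair of values `(a, b)` some `f ∈ S` has `f i = a` and `f j = b`. -/
def IsPauliSet {V : Type*} (G : SimpleGraph V) (S : Finset (V → Fin 3)) : Prop :=
  ∀ i j : V, G.Adj i j → ∀ a b : Fin 3, ∃ f ∈ S, f i = a ∧ f j = b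

/-- `phi2G G` is the minimum cardinality of a Pauli set for `G`. -/
noncomputable def phi2G {V : Type*} (G : SimpleGraph V) : ℕ :=
  sInf {N : ℕ | ∃ S : Finset (V → Fin 3), S.card = N ∧ IsPauliSet G S}

/-- `phi2 n` is `phi2G` of the complete graph on `n` vertices: the minimal number of
Pauli settings for two-body overlapping tomography of `n` qubits. -/
noncomputable def phi2 (n : ℕ) : ℕ := phi2G (⊤ : SimpleGraph (Fin n))

/-!
Pulling back Pauli sets along a colouring gives `phi2G G ≤ phi2 χ(G)`, so the point is that a Pauli
set `S` of `G` has at least `phi2 χ(G)` elements. Reading the elements of `S` as the rows of an array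
over three symbols, a vertex becomes a column, and adjacent vertices have columns in which all nine
pairs of symbols occur (`QI`). Explicit arrays show `phi2 4 ≤ 9`, `phi2 5 ≤ 11` and `phi2 7 ≤ 12`,
and `9 ≤ S.card` is clear as soon as `G` has an edge. If `χ(G) = 8`, then `G` is complete. Hence it
suffices to prove that `G` is `4`-colourable if `S.card ≤ 10` (`colorable_four_of_card_le`) and
`5`-colourable if `S.card ≤ 11` (`colorable_five_of_card_le`). In particular `phi2 5 = 11` and
`phi2 6 = 12`, without a separate proof.

Both colouring statements combine a fact about graphs with a fact about columns.

* A graph on eight vertices is `4`-colourable unless it contains one of the patterns `ConeC5`,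
  `ConeMoser` and `ConeTri` (`colorable_four`), and `5`-colourable unless it contains `TripleC5`
  (`colorable_five`). If there are three independent vertices, they form a colour class, and
  the other five vertices are treated directly. Otherwise a failure to colour the graph restricts
  the disjoint non-adjacent pairs, which forces many edges.
* Columns of length `10` whose independence relation follows one of the first three patterns do not
  exist, nor do columns of length `11` following `TripleC5`. Reordering rows and renaming symbols
  brings two independent columns `v`, `w` into one of very few normal forms. A column independent of
  `v` then may be assumed to start with `0, 1, 2`, which leaves a finite list of candidates. The
  columns are encoded as bit masks (`Code`), so that the search through the list is a short kernel
  computation.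

All four patterns are preserved by homomorphisms, so vertices with equal columns do not matter.
-/

/-! ### Patterns -/

/-- Both ends of some edge `v w` are joined to all vertices of a closed walk of length five. The
vertices of the walk may repeat, so `K₅` qualifies as well (the walk then runs in a triangle). -/
def ConeC5 {α : Type*} (r : α → α → Prop) : Prop :=
  ∃ v w x₀ x₁ x₂ x₃ x₄, r v w ∧ (r v x₀ ∧ r v x₁ ∧ r v x₂ ∧ r v x₃ ∧ r v x₄) ∧
    (r w x₀ ∧ r w x₁ ∧ r w x₂ ∧ r w x₃ ∧ r w x₄) ∧
    r x₀ x₁ ∧ r x₁ x₂ ∧ r x₂ x₃ ∧ r x₃ x₄ ∧ r x₄ x₀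

/-- A hub `t` joined to all vertices of a Moser spindle: two diamonds with common tip `x` and other
tips `y` and `z`, where `y` and `z` are joined. -/
def ConeMoser {α : Type*} (r : α → α → Prop) : Prop :=
  ∃ t x a b y c d z, (r t x ∧ r t a ∧ r t b ∧ r t y ∧ r t c ∧ r t d ∧ r t z) ∧
    (r x a ∧ r x b ∧ r a b ∧ r a y ∧ r b y) ∧ (r x c ∧ r x d ∧ r c d ∧ r c z ∧ r d z) ∧ r y z

/-- A hub `t` joined to the following configuration: a triangle `x a b`, on each side of it a
further triangle (with apices `i`, `j`, `l`), and a vertex `u` joined to the three apices. -/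
def ConeTri {α : Type*} (r : α → α → Prop) : Prop :=
  ∃ t x a b i j l u, (r t x ∧ r t a ∧ r t b ∧ r t i ∧ r t j ∧ r t l ∧ r t u) ∧
    (r x a ∧ r x b ∧ r a b) ∧ (r a i ∧ r b i) ∧ (r x j ∧ r b j) ∧ (r x l ∧ r a l) ∧
    r i u ∧ r j u ∧ r l u

/-- All vertices of some triangle `u v w` are joined to all vertices of a closed walk of length
five. As for `ConeC5`, vertices of the walk may repeat, so `K₆` qualifies as well. -/
def TripleC5 {α : Type*} (r : α → α → Prop) : Prop :=
  ∃ u v w x₀ x₁ x₂ x₃ x₄, (r u v ∧ r u w ∧ r v w) ∧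
    (r u x₀ ∧ r u x₁ ∧ r u x₂ ∧ r u x₃ ∧ r u x₄) ∧
    (r v x₀ ∧ r v x₁ ∧ r v x₂ ∧ r v x₃ ∧ r v x₄) ∧
    (r w x₀ ∧ r w x₁ ∧ r w x₂ ∧ r w x₃ ∧ r w x₄) ∧
    r x₀ x₁ ∧ r x₁ x₂ ∧ r x₂ x₃ ∧ r x₃ x₄ ∧ r x₄ x₀

/-! ### Colourings of eight vertices -/

section Colouring

variable {G : SimpleGraph (Fin 8)}

/-- Throughout, an injective `q : Fin 8 → Fin 8` serves as a labelling of the vertices; a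
colouring may be given in terms of the labels. -/
lemma colorable_of_labels {k : ℕ} {q : Fin 8 → Fin 8} (hq : Function.Injective q)
    (c : Fin 8 → Fin k) (h : ∀ i j, i < j → c i = c j → ¬ G.Adj (q i) (q j)) :
    G.Colorable k := by
  have hb : Function.Bijective q := Finite.injective_iff_bijective.1 hq
  let e := Equiv.ofBijective q hb
  refine ⟨SimpleGraph.Coloring.mk (fun v => c (e.symm v)) ?_⟩
  intro v w hvw hc
  have hv : q (e.symm v) = v := e.apply_symm_apply v
  have hw : q (e.symm w) = w := e.apply_symm_apply w
  rcases lt_trichotomy (e.symm v) (e.symm w) with hlt | heq | hgt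
  · exact h _ _ hlt hc (by rwa [hv, hw])
  · rw [← hv, ← hw, heq] at hvw
    exact G.loopless.irrefl _ hvw
  · exact h _ _ hgt hc.symm (by rw [hv, hw]; exact hvw.symm)

lemma colorable_2222 {q : Fin 8 → Fin 8} (hq : Function.Injective q)
    (h1 : ¬ G.Adj (q 0) (q 1)) (h2 : ¬ G.Adj (q 2) (q 3)) (h3 : ¬ G.Adj (q 4) (q 5))
    (h4 : ¬ G.Adj (q 6) (q 7)) : G.Colorable 4 := by
  refine colorable_of_labels hq ![0, 0, 1, 1, 2, 2, 3, 3] fun i j hij hc => ?_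
  have : ∀ i j : Fin 8, i < j →
      (![0, 0, 1, 1, 2, 2, 3, 3] : Fin 8 → Fin 4) i = ![0, 0, 1, 1, 2, 2, 3, 3] j →
      (i = 0 ∧ j = 1) ∨ (i = 2 ∧ j = 3) ∨ (i = 4 ∧ j = 5) ∨ (i = 6 ∧ j = 7) := by decide
  rcases this i j hij hc with ⟨rfl, rfl⟩ | ⟨rfl, rfl⟩ | ⟨rfl, rfl⟩ | ⟨rfl, rfl⟩ <;> assumption

lemma colorable_22211 {q : Fin 8 → Fin 8} (hq : Function.Injective q)
    (h1 : ¬ G.Adj (q 0) (q 1)) (h2 : ¬ G.Adj (q 2) (q 3)) (h3 : ¬ G.Adj (q 4) (q 5)) :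
    G.Colorable 5 := by
  refine colorable_of_labels hq ![0, 0, 1, 1, 2, 2, 3, 4] fun i j hij hc => ?_
  have : ∀ i j : Fin 8, i < j →
      (![0, 0, 1, 1, 2, 2, 3, 4] : Fin 8 → Fin 5) i = ![0, 0, 1, 1, 2, 2, 3, 4] j →
      (i = 0 ∧ j = 1) ∨ (i = 2 ∧ j = 3) ∨ (i = 4 ∧ j = 5) := by decide
  rcases this i j hij hc with ⟨rfl, rfl⟩ | ⟨rfl, rfl⟩ | ⟨rfl, rfl⟩ <;> assumption

lemma colorable_3221 {q : Fin 8 → Fin 8} (hq : Function.Injective q)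
    (h1 : ¬ G.Adj (q 0) (q 1)) (h2 : ¬ G.Adj (q 0) (q 2)) (h3 : ¬ G.Adj (q 1) (q 2))
    (h4 : ¬ G.Adj (q 3) (q 4)) (h5 : ¬ G.Adj (q 5) (q 6)) : G.Colorable 4 := by
  refine colorable_of_labels hq ![0, 0, 0, 1, 1, 2, 2, 3] fun i j hij hc => ?_
  have : ∀ i j : Fin 8, i < j →
      (![0, 0, 0, 1, 1, 2, 2, 3] : Fin 8 → Fin 4) i = ![0, 0, 0, 1, 1, 2, 2, 3] j →
      (i = 0 ∧ j = 1) ∨ (i = 0 ∧ j = 2) ∨ (i = 1 ∧ j = 2) ∨ (i = 3 ∧ j = 4) ∨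
        (i = 5 ∧ j = 6) := by decide
  rcases this i j hij hc with ⟨rfl, rfl⟩ | ⟨rfl, rfl⟩ | ⟨rfl, rfl⟩ | ⟨rfl, rfl⟩ | ⟨rfl, rfl⟩ <;>
    assumption

lemma colorable_3311 {q : Fin 8 → Fin 8} (hq : Function.Injective q)
    (h1 : ¬ G.Adj (q 0) (q 1)) (h2 : ¬ G.Adj (q 0) (q 2)) (h3 : ¬ G.Adj (q 1) (q 2))
    (h4 : ¬ G.Adj (q 3) (q 4)) (h5 : ¬ G.Adj (q 3) (q 5)) (h6 : ¬ G.Adj (q 4) (q 5)) :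
    G.Colorable 4 := by
  refine colorable_of_labels hq ![0, 0, 0, 1, 1, 1, 2, 3] fun i j hij hc => ?_
  have : ∀ i j : Fin 8, i < j →
      (![0, 0, 0, 1, 1, 1, 2, 3] : Fin 8 → Fin 4) i = ![0, 0, 0, 1, 1, 1, 2, 3] j →
      (i = 0 ∧ j = 1) ∨ (i = 0 ∧ j = 2) ∨ (i = 1 ∧ j = 2) ∨ (i = 3 ∧ j = 4) ∨
        (i = 3 ∧ j = 5) ∨ (i = 4 ∧ j = 5) := by decide
  rcases this i j hij hc with ⟨rfl, rfl⟩ | ⟨rfl, rfl⟩ | ⟨rfl, rfl⟩ | ⟨rfl, rfl⟩ | ⟨rfl, rfl⟩ |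
    ⟨rfl, rfl⟩ <;> assumption

lemma colorable_32111 {q : Fin 8 → Fin 8} (hq : Function.Injective q)
    (h1 : ¬ G.Adj (q 0) (q 1)) (h2 : ¬ G.Adj (q 0) (q 2)) (h3 : ¬ G.Adj (q 1) (q 2))
    (h4 : ¬ G.Adj (q 3) (q 4)) : G.Colorable 5 := by
  refine colorable_of_labels hq ![0, 0, 0, 1, 1, 2, 3, 4] fun i j hij hc => ?_
  have : ∀ i j : Fin 8, i < j →
      (![0, 0, 0, 1, 1, 2, 3, 4] : Fin 8 → Fin 5) i = ![0, 0, 0, 1, 1, 2, 3, 4] j →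
      (i = 0 ∧ j = 1) ∨ (i = 0 ∧ j = 2) ∨ (i = 1 ∧ j = 2) ∨ (i = 3 ∧ j = 4) := by decide
  rcases this i j hij hc with ⟨rfl, rfl⟩ | ⟨rfl, rfl⟩ | ⟨rfl, rfl⟩ | ⟨rfl, rfl⟩ <;> assumption

/-- An injective list of at most eight vertices extends to a labelling of all of them. -/
lemma exists_labelling (f : Fin 8 → Fin 8) (s : Finset (Fin 8)) (hf : Set.InjOn f s) :
    ∃ q : Fin 8 → Fin 8, Function.Injective q ∧ ∀ i ∈ s, q i = f i := by
  obtain ⟨g, hg⟩ := Finset.exists_equiv_extend_of_card_eq (t := (Finset.univ : Finset (Fin 8)))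
    (by simp) (s := s) (f := f) (by simp) hf
  exact ⟨fun i => g i, fun a b h => g.injective (Subtype.ext h), hg⟩

lemma ConeC5.of_K5 {α : Type*} {r : α → α → Prop} (hs : ∀ x y, r x y → r y x) {v w a b c : α}
    (h : r v w ∧ (r v a ∧ r v b ∧ r v c) ∧ (r w a ∧ r w b ∧ r w c) ∧ r a b ∧ r b c ∧ r a c) :
    ConeC5 r := by
  obtain ⟨h0, ⟨h1, h2, h3⟩, ⟨h4, h5, h6⟩, h7, h8, h9⟩ := h
  exact ⟨v, w, a, b, c, a, b, h0, ⟨h1, h2, h3, h1, h2⟩, ⟨h4, h5, h6, h4, h5⟩, h7, h8, hs _ _ h9, h7,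
    hs _ _ h7⟩

lemma TripleC5.of_K6 {α : Type*} {r : α → α → Prop} (hs : ∀ x y, r x y → r y x) {u v w a b c : α}
    (h0 : r u v ∧ r u w ∧ r v w) (h : (r u a ∧ r u b ∧ r u c) ∧
      (r v a ∧ r v b ∧ r v c) ∧ (r w a ∧ r w b ∧ r w c) ∧ r a b ∧ r b c ∧ r a c) :
    TripleC5 r := by
  obtain ⟨⟨g1, g2, g3⟩, ⟨h1, h2, h3⟩, ⟨h4, h5, h6⟩, h7, h8, h9⟩ := h
  exact ⟨u, v, w, a, b, c, a, b, h0, ⟨g1, g2, g3, g1, g2⟩, ⟨h1, h2, h3, h1, h2⟩,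
    ⟨h4, h5, h6, h4, h5⟩, h7, h8, hs _ _ h9, h7, hs _ _ h7⟩

/-! ### Graphs with three independent vertices -/

/-- The vertices consist of an independent triple, a clique on four vertices and `q 7`. If sharing
colours between the clique and the remaining vertices does not give a `4`-colouring, then for each
vertex `K c` of the clique that `q 7` misses, some member of the triple is joined to `q 7` and to the
clique except `K c`. The number of neighbours of `q 7` in the clique then decides which pattern
occurs: two neighbours give `ConeC5` with a five-cycle, three or four give a `K₅`, one gives
`ConeTri`, and none is impossible since the triple is too small. -/
lemma case_K4_tri (h5 : ¬ ConeC5 G.Adj) (hM : ¬ ConeTri G.Adj) {q : Fin 8 → Fin 8}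
    (hq : Function.Injective q)
    (i1 : ¬ G.Adj (q 0) (q 1)) (i2 : ¬ G.Adj (q 0) (q 2)) (i3 : ¬ G.Adj (q 1) (q 2))
    (hK : G.Adj (q 3) (q 4) ∧ G.Adj (q 3) (q 5) ∧ G.Adj (q 3) (q 6) ∧ G.Adj (q 4) (q 5) ∧
      G.Adj (q 4) (q 6) ∧ G.Adj (q 5) (q 6)) : G.Colorable 4 := by
  by_contra hcol
  have sy : ∀ x y, G.Adj x y → G.Adj y x := fun x y h => h.symm
  obtain ⟨k01, k02, k03, k12, k13, k23⟩ := hK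
  let I : Fin 3 → Fin 8 := fun i => q (Fin.castLE (by norm_num) i)
  let K : Fin 4 → Fin 8 := fun i => q (![3, 4, 5, 6] i)
  have hKK : ∀ c d, c ≠ d → G.Adj (K c) (K d) := by
    intro c d hcd
    fin_cases c <;> fin_cases d <;> first | exact absurd rfl hcd | assumption | (apply sy; assumption)
  -- no vertex is joined to the whole clique
  have hno : ∀ x, ∃ c, ¬ G.Adj x (K c) := by
    intro x
    by_contra hx
    push Not at hx
    exact h5 (ConeC5.of_K5 sy ⟨hx 0, ⟨hx 1, hx 2, hx 3⟩, ⟨k01, k02, k03⟩, k12, k23, k13⟩)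
  have key : ∀ c, ¬ G.Adj (q 7) (K c) → ∃ i, G.Adj (q 7) (I i) ∧ ∀ d, d ≠ c → G.Adj (I i) (K d) := by
    intro c hc
    by_contra hcon
    push Not at hcon
    have : ∀ i, ∃ d, ¬ G.Adj (I i) (K d) ∧ (G.Adj (q 7) (I i) → d ≠ c) := by
      intro i
      by_cases hi : G.Adj (q 7) (I i)
      · obtain ⟨d, hd, hd'⟩ := hcon i hi
        exact ⟨d, hd', fun _ => hd⟩
      · obtain ⟨d, hd⟩ := hno (I i)
        exact ⟨d, hd, fun h => absurd h hi⟩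
    choose f hf hf' using this
    refine hcol (colorable_of_labels hq ![f 0, f 1, f 2, 0, 1, 2, 3, c] fun i j hij hc' hadj => ?_)
    have e1 : ∀ i d, f i = d → G.Adj (I i) (K d) → False := fun i d h h' => hf i (h ▸ h')
    have e2 : ∀ i, f i = c → G.Adj (I i) (q 7) → False := fun i h h' => hf' i (sy _ _ h') h
    have e3 : ∀ d, d = c → G.Adj (K d) (q 7) → False := fun d h h' => hc (h ▸ sy _ _ h')
    fin_cases i <;> fin_cases j <;> first
      | exact absurd hij (by decide)
      | exact i1 hadj
      | exact i2 hadj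
      | exact i3 hadj
      | exact e1 0 _ hc' hadj
      | exact e1 1 _ hc' hadj
      | exact e1 2 _ hc' hadj
      | exact e2 0 hc' hadj
      | exact e2 1 hc' hadj
      | exact e2 2 hc' hadj
      | exact e3 _ hc' hadj
      | (simp at hc')
  choose! g hg hg' using key
  have one : ∀ a b c d, a ≠ b → a ≠ c → a ≠ d → b ≠ c → b ≠ d → c ≠ d → G.Adj (q 7) (K a) →
      G.Adj (q 7) (K b) → G.Adj (q 7) (K c) → False := by
    intro a b c d hab hac had hbc hbd hcd ha hb hc
    by_cases hd : G.Adj (q 7) (K d)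
    · obtain ⟨e, he⟩ := hno (q 7)
      have : ∀ a b c d e : Fin 4, a ≠ b → a ≠ c → a ≠ d → b ≠ c → b ≠ d → c ≠ d →
        e = a ∨ e = b ∨ e = c ∨ e = d := by decide
      rcases this a b c d e hab hac had hbc hbd hcd with rfl | rfl | rfl | rfl <;> exact he ‹_›
    · exact h5 (ConeC5.of_K5 sy ⟨hg d hd, ⟨ha, hb, hc⟩,
        ⟨hg' d hd a had, hg' d hd b hbd, hg' d hd c hcd⟩, hKK a b hab, hKK b c hbc, hKK a c hac⟩)
  have two : ∀ a b c d, a ≠ b → a ≠ c → a ≠ d → b ≠ c → b ≠ d → c ≠ d → G.Adj (q 7) (K a) →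
      G.Adj (q 7) (K b) → ¬ G.Adj (q 7) (K c) → ¬ G.Adj (q 7) (K d) → False := by
    intro a b c d hab hac had hbc hbd hcd ha hb hc hd
    exact h5 ⟨K a, K b, q 7, I (g c), K d, K c, I (g d), hKK a b hab,
      ⟨sy _ _ ha, sy _ _ (hg' c hc a hac), hKK a d had, hKK a c hac, sy _ _ (hg' d hd a had)⟩,
      ⟨sy _ _ hb, sy _ _ (hg' c hc b hbc), hKK b d hbd, hKK b c hbc, sy _ _ (hg' d hd b hbd)⟩,
      hg c hc, hg' c hc d hcd.symm, hKK d c hcd.symm, sy _ _ (hg' d hd c hcd), sy _ _ (hg d hd)⟩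
  have three : ∀ a b c d, a ≠ b → a ≠ c → a ≠ d → b ≠ c → b ≠ d → c ≠ d → G.Adj (q 7) (K a) →
      ¬ G.Adj (q 7) (K b) → ¬ G.Adj (q 7) (K c) → ¬ G.Adj (q 7) (K d) → False := by
    intro a b c d hab hac had hbc hbd hcd ha hb hc hd
    exact hM ⟨K a, K b, K c, K d, I (g b), I (g c), I (g d), q 7,
      ⟨hKK a b hab, hKK a c hac, hKK a d had, sy _ _ (hg' b hb a hab), sy _ _ (hg' c hc a hac),
        sy _ _ (hg' d hd a had), sy _ _ ha⟩, ⟨hKK b c hbc, hKK b d hbd, hKK c d hcd⟩,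
      ⟨sy _ _ (hg' b hb c hbc.symm), sy _ _ (hg' b hb d hbd.symm)⟩,
      ⟨sy _ _ (hg' c hc b hbc), sy _ _ (hg' c hc d hcd.symm)⟩,
      ⟨sy _ _ (hg' d hd b hbd), sy _ _ (hg' d hd c hcd)⟩,
      sy _ _ (hg b hb), sy _ _ (hg c hc), sy _ _ (hg d hd)⟩
  have four : ¬ ∀ c, ¬ G.Adj (q 7) (K c) := by
    intro h
    have : Function.Injective g := by
      intro c d hcd
      by_contra hne
      obtain ⟨e, he⟩ := hno (I (g c))
      have hec : e = c := by by_contra h'; exact he (hg' c (h c) e h')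
      have hed : e = d := by by_contra h'; exact he (hcd ▸ hg' d (h d) e h')
      exact hne (hec.symm.trans hed)
    simpa using Fintype.card_le_of_injective g this
  by_cases a0 : G.Adj (q 7) (K 0) <;> by_cases a1 : G.Adj (q 7) (K 1) <;>
  by_cases a2 : G.Adj (q 7) (K 2) <;> by_cases a3 : G.Adj (q 7) (K 3)
  · exact one 0 1 2 3 (by decide) (by decide) (by decide) (by decide) (by decide) (by decide) a0 a1 a2
  · exact one 0 1 2 3 (by decide) (by decide) (by decide) (by decide) (by decide) (by decide) a0 a1 a2
  · exact one 0 1 3 2 (by decide) (by decide) (by decide) (by decide) (by decide) (by decide) a0 a1 a3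
  · exact two 0 1 2 3 (by decide) (by decide) (by decide) (by decide) (by decide) (by decide) a0 a1 a2 a3
  · exact one 0 2 3 1 (by decide) (by decide) (by decide) (by decide) (by decide) (by decide) a0 a2 a3
  · exact two 0 2 1 3 (by decide) (by decide) (by decide) (by decide) (by decide) (by decide) a0 a2 a1 a3
  · exact two 0 3 1 2 (by decide) (by decide) (by decide) (by decide) (by decide) (by decide) a0 a3 a1 a2
  · exact three 0 1 2 3 (by decide) (by decide) (by decide) (by decide) (by decide) (by decide) a0 a1 a2 a3
  · exact one 1 2 3 0 (by decide) (by decide) (by decide) (by decide) (by decide) (by decide) a1 a2 a3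
  · exact two 1 2 0 3 (by decide) (by decide) (by decide) (by decide) (by decide) (by decide) a1 a2 a0 a3
  · exact two 1 3 0 2 (by decide) (by decide) (by decide) (by decide) (by decide) (by decide) a1 a3 a0 a2
  · exact three 1 0 2 3 (by decide) (by decide) (by decide) (by decide) (by decide) (by decide) a1 a0 a2 a3
  · exact two 2 3 0 1 (by decide) (by decide) (by decide) (by decide) (by decide) (by decide) a2 a3 a0 a1
  · exact three 2 0 1 3 (by decide) (by decide) (by decide) (by decide) (by decide) (by decide) a2 a0 a1 a3
  · exact three 3 0 1 2 (by decide) (by decide) (by decide) (by decide) (by decide) (by decide) a3 a0 a1 a2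
  · refine four fun c => ?_
    fin_cases c <;> assumption

/-- Give an independent triple one colour. The other five vertices either split into three further
colour classes or contain a `K₄`. -/
lemma colorable_four_of_indep (h5 : ¬ ConeC5 G.Adj) (hM : ¬ ConeTri G.Adj) {q : Fin 8 → Fin 8}
    (hq : Function.Injective q)
    (i1 : ¬ G.Adj (q 0) (q 1)) (i2 : ¬ G.Adj (q 0) (q 2)) (i3 : ¬ G.Adj (q 1) (q 2)) :
    G.Colorable 4 := by
  by_contra hcol
  have P : ∀ a b c d e : Fin 8, Function.Injective ![0, 1, 2, a, b, c, d, e] →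
      G.Adj (q a) (q b) ∨ G.Adj (q c) (q d) := by
    intro a b c d e hinj
    by_contra h
    push Not at h
    exact hcol (colorable_3221 (q := q ∘ ![0, 1, 2, a, b, c, d, e]) (hq.comp hinj) i1 i2 i3 h.1 h.2)
  have T : ∀ a b c d e : Fin 8, Function.Injective ![0, 1, 2, a, b, c, d, e] →
      G.Adj (q a) (q b) ∨ G.Adj (q a) (q c) ∨ G.Adj (q b) (q c) := by
    intro a b c d e hinj
    by_contra h
    push Not at h
    exact hcol (colorable_3311 (q := q ∘ ![0, 1, 2, a, b, c, d, e]) (hq.comp hinj) i1 i2 i3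
      h.1 h.2.1 h.2.2)
  have K : ∀ a b c d e : Fin 8, Function.Injective ![0, 1, 2, a, b, c, d, e] →
      ¬ (G.Adj (q a) (q b) ∧ G.Adj (q a) (q c) ∧ G.Adj (q a) (q d) ∧ G.Adj (q b) (q c) ∧
        G.Adj (q b) (q d) ∧ G.Adj (q c) (q d)) := by
    intro a b c d e hinj h
    exact hcol (case_K4_tri (q := q ∘ ![0, 1, 2, a, b, c, d, e]) h5 hM (hq.comp hinj) i1 i2 i3 h)
  have k1 := K 3 4 5 6 7 (by decide)
  have k2 := K 3 4 5 7 6 (by decide)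
  have k3 := K 3 4 6 7 5 (by decide)
  have k4 := K 3 5 6 7 4 (by decide)
  have k5 := K 4 5 6 7 3 (by decide)
  have t1 := T 3 4 5 6 7 (by decide)
  have t2 := T 3 4 6 5 7 (by decide)
  have t3 := T 3 4 7 5 6 (by decide)
  have t4 := T 3 5 6 4 7 (by decide)
  have t5 := T 3 5 7 4 6 (by decide)
  have t6 := T 3 6 7 4 5 (by decide)
  have t7 := T 4 5 6 3 7 (by decide)
  have t8 := T 4 5 7 3 6 (by decide)
  have t9 := T 4 6 7 3 5 (by decide)
  have t10 := T 5 6 7 3 4 (by decide)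
  have p1 := P 3 4 5 6 7 (by decide)
  have p2 := P 3 5 4 6 7 (by decide)
  have p3 := P 3 6 4 5 7 (by decide)
  have p4 := P 3 4 5 7 6 (by decide)
  have p5 := P 3 5 4 7 6 (by decide)
  have p6 := P 3 7 4 5 6 (by decide)
  have p7 := P 3 4 6 7 5 (by decide)
  have p8 := P 3 6 4 7 5 (by decide)
  have p9 := P 3 7 4 6 5 (by decide)
  have p10 := P 3 5 6 7 4 (by decide)
  have p11 := P 3 6 5 7 4 (by decide)
  have p12 := P 3 7 5 6 4 (by decide)
  have p13 := P 4 5 6 7 3 (by decide)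
  have p14 := P 4 6 5 7 3 (by decide)
  have p15 := P 4 7 5 6 3 (by decide)
  clear P T K i1 i2 i3 hcol h5 hM
  grind

/-- Give an independent triple one colour. If the other five vertices are not `4`-colourable, they
form a `K₅`. -/
lemma colorable_five_of_indep (hT : ¬ TripleC5 G.Adj) {q : Fin 8 → Fin 8}
    (hq : Function.Injective q)
    (i1 : ¬ G.Adj (q 0) (q 1)) (i2 : ¬ G.Adj (q 0) (q 2)) (i3 : ¬ G.Adj (q 1) (q 2)) :
    G.Colorable 5 := by
  by_contra hcol
  have sy : ∀ x y, G.Adj x y → G.Adj y x := fun x y h => h.symm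
  have P : ∀ a b c d e : Fin 8, Function.Injective ![0, 1, 2, a, b, c, d, e] →
      G.Adj (q a) (q b) := by
    intro a b c d e hinj
    by_contra h
    exact hcol (colorable_32111 (q := q ∘ ![0, 1, 2, a, b, c, d, e]) (hq.comp hinj) i1 i2 i3 h)
  let I : Fin 3 → Fin 8 := fun i => q (Fin.castLE (by norm_num) i)
  let K : Fin 5 → Fin 8 := fun i => q (![3, 4, 5, 6, 7] i)
  -- since the graph contains no `K₆`, each of the three independent vertices misses some vertex of
  -- the clique and may share its colour
  have hno : ∀ i, ∃ c, ¬ G.Adj (I i) (K c) := by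
    intro i
    by_contra hx
    push Not at hx
    exact hT (TripleC5.of_K6 sy ⟨hx 0, hx 1, P 3 4 5 6 7 (by decide)⟩
      ⟨⟨hx 2, hx 3, hx 4⟩,
        ⟨P 3 5 4 6 7 (by decide), P 3 6 4 5 7 (by decide), P 3 7 4 5 6 (by decide)⟩,
        ⟨P 4 5 3 6 7 (by decide), P 4 6 3 5 7 (by decide), P 4 7 3 5 6 (by decide)⟩,
        P 5 6 3 4 7 (by decide), P 6 7 3 4 5 (by decide), P 5 7 3 4 6 (by decide)⟩)
  choose f hf using hno
  have e1 : ∀ i d, f i = d → G.Adj (I i) (K d) → False := fun i d h h' => hf i (h ▸ h')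
  refine hcol (colorable_of_labels hq ![f 0, f 1, f 2, 0, 1, 2, 3, 4] fun i j hij hc' hadj => ?_)
  fin_cases i <;> fin_cases j <;> first
    | exact absurd hij (by decide)
    | exact i1 hadj
    | exact i2 hadj
    | exact i3 hadj
    | exact e1 0 _ hc' hadj
    | exact e1 1 _ hc' hadj
    | exact e1 2 _ hc' hadj
    | (simp at hc')

/-! ### Graphs without three independent vertices: five colours -/

/-- A graph in which every three vertices span an edge. -/
def TriDense (G : SimpleGraph (Fin 8)) : Prop :=
  ∀ x y z, x ≠ y → x ≠ z → y ≠ z → G.Adj x y ∨ G.Adj x z ∨ G.Adj y z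

lemma triDense_or (G : SimpleGraph (Fin 8)) : TriDense G ∨ ∃ q : Fin 8 → Fin 8,
    Function.Injective q ∧ ¬ G.Adj (q 0) (q 1) ∧ ¬ G.Adj (q 0) (q 2) ∧ ¬ G.Adj (q 1) (q 2) := by
  by_cases h : TriDense G
  · exact Or.inl h
  · unfold TriDense at h
    push Not at h
    obtain ⟨x, y, z, hxy, hxz, hyz, h1, h2, h3⟩ := h
    obtain ⟨q, hq, hqs⟩ := exists_labelling ![x, y, z, 0, 0, 0, 0, 0] {0, 1, 2} (by
      intro i hi j hj hij
      simp only [Finset.coe_insert, Finset.coe_singleton, Set.mem_insert_iff,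
        Set.mem_singleton_iff] at hi hj
      rcases hi with rfl | rfl | rfl <;> rcases hj with rfl | rfl | rfl <;>
        simp_all [Matrix.cons_val])
    have q0 : q 0 = x := hqs 0 (by simp)
    have q1 : q 1 = y := hqs 1 (by simp)
    have q2 : q 2 = z := hqs 2 (by simp)
    exact Or.inr ⟨q, hq, by rwa [q0, q1], by rwa [q0, q2], by rwa [q1, q2]⟩

/-- If there are no three disjoint non-adjacent pairs, two vertices outside two such pairs are
adjacent. -/
lemma adj_of_disjoint_nonadj
    (hP : ∀ p : Fin 8 → Fin 8, Function.Injective p →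
      G.Adj (p 0) (p 1) ∨ G.Adj (p 2) (p 3) ∨ G.Adj (p 4) (p 5)) {q : Fin 8 → Fin 8}
    (hq : Function.Injective q) (a b c d e f g h : Fin 8)
    (hi : Function.Injective ![a, b, c, d, e, f, g, h])
    (hab : ¬ G.Adj (q a) (q b)) (hcd : ¬ G.Adj (q c) (q d)) : G.Adj (q e) (q f) := by
  rcases hP (q ∘ ![a, b, c, d, e, f, g, h]) (hq.comp hi) with h | h | h
  · exact absurd h hab
  · exact absurd h hcd
  · exact h

lemma TriDense.adj (hd : TriDense G) {q : Fin 8 → Fin 8} (hq : Function.Injective q)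
    {a b c : Fin 8} (hab : ¬ G.Adj (q a) (q b)) (hac : ¬ G.Adj (q a) (q c)) (h1 : a ≠ b)
    (h2 : a ≠ c) (h3 : b ≠ c) : G.Adj (q b) (q c) := by
  rcases hd _ _ _ (hq.ne h1) (hq.ne h2) (hq.ne h3) with h | h | h
  · exact absurd h hab
  · exact absurd h hac
  · exact h

/-- The non-edges contain the five-cycle `0 1 3 2 4`. In the absence of independent triples the
complementary pairs are edges and form a five-cycle again, and the three other vertices form a
triangle joined to it. -/
lemma false_of_common_miss (hT : ¬ TripleC5 G.Adj) (hd : TriDense G)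
    (hP : ∀ p : Fin 8 → Fin 8, Function.Injective p →
      G.Adj (p 0) (p 1) ∨ G.Adj (p 2) (p 3) ∨ G.Adj (p 4) (p 5)) {q : Fin 8 → Fin 8}
    (hq : Function.Injective q) (h01 : ¬ G.Adj (q 0) (q 1)) (h23 : ¬ G.Adj (q 2) (q 3))
    (h13 : ¬ G.Adj (q 1) (q 3)) (h04 : ¬ G.Adj (q 0) (q 4)) (h24 : ¬ G.Adj (q 2) (q 4)) :
    False := by
  have sy : ∀ x y, G.Adj x y → G.Adj y x := fun x y h => h.symm
  have Q := adj_of_disjoint_nonadj hP hq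
  have h42 : ¬ G.Adj (q 4) (q 2) := fun h => h24 (sy _ _ h)
  have h40 : ¬ G.Adj (q 4) (q 0) := fun h => h04 (sy _ _ h)
  have h10 : ¬ G.Adj (q 1) (q 0) := fun h => h01 (sy _ _ h)
  have h31 : ¬ G.Adj (q 3) (q 1) := fun h => h13 (sy _ _ h)
  have h32 : ¬ G.Adj (q 3) (q 2) := fun h => h23 (sy _ _ h)
  -- the complement of the path `1 0 4 2 3 1` is again a five-cycle
  have u : ∀ a b c : Fin 8, Function.Injective ![0, 1, 2, 3, 4, a, b, c] →
      G.Adj (q a) (q 4) ∧ G.Adj (q a) (q 1) ∧ G.Adj (q a) (q 2) ∧ G.Adj (q a) (q 0) ∧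
        G.Adj (q a) (q 3) ∧ G.Adj (q a) (q b) := by
    intro a b c hi
    have inj : ∀ s : Fin 8 → Fin 8, Function.Injective s →
        Function.Injective (![0, 1, 2, 3, 4, a, b, c] ∘ s) := fun s hs => hi.comp hs
    refine ⟨Q 0 1 2 3 a 4 b c ?_ h01 h23, Q 0 4 2 3 a 1 b c ?_ h04 h23,
      Q 0 4 1 3 a 2 b c ?_ h04 h13, Q 2 4 1 3 a 0 b c ?_ h24 h13, Q 0 1 2 4 a 3 b c ?_ h01 h24,
      Q 0 1 2 3 a b 4 c ?_ h01 h23⟩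
    · convert inj ![0, 1, 2, 3, 5, 4, 6, 7] (by decide) using 1
      ext i; fin_cases i <;> rfl
    · convert inj ![0, 4, 2, 3, 5, 1, 6, 7] (by decide) using 1
      ext i; fin_cases i <;> rfl
    · convert inj ![0, 4, 1, 3, 5, 2, 6, 7] (by decide) using 1
      ext i; fin_cases i <;> rfl
    · convert inj ![2, 4, 1, 3, 5, 0, 6, 7] (by decide) using 1
      ext i; fin_cases i <;> rfl
    · convert inj ![0, 1, 2, 4, 5, 3, 6, 7] (by decide) using 1
      ext i; fin_cases i <;> rfl
    · convert inj ![0, 1, 2, 3, 5, 6, 4, 7] (by decide) using 1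
      ext i; fin_cases i <;> rfl
  obtain ⟨a1, a2, a3, a4, a5, a6⟩ := u 5 6 7 (by decide)
  obtain ⟨b1, b2, b3, b4, b5, b6⟩ := u 6 7 5 (by decide)
  obtain ⟨c1, c2, c3, c4, c5, c6⟩ := u 7 5 6 (by decide)
  exact hT ⟨q 5, q 6, q 7, q 4, q 1, q 2, q 0, q 3, ⟨a6, sy _ _ c6, b6⟩, ⟨a1, a2, a3, a4, a5⟩,
    ⟨b1, b2, b3, b4, b5⟩, ⟨c1, c2, c3, c4, c5⟩,
    hd.adj hq h04 h01 (by decide) (by decide) (by decide),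
    hd.adj hq h31 h32 (by decide) (by decide) (by decide),
    hd.adj hq h42 h40 (by decide) (by decide) (by decide),
    hd.adj hq h10 h13 (by decide) (by decide) (by decide),
    hd.adj hq h23 h24 (by decide) (by decide) (by decide)⟩

/-- Vertices `4, 5, 6, 7` form a clique, completely joined to `1` and `3`. To avoid a `K₆`, the
pair `1, 3` is not adjacent, and `0` and `2` both miss a vertex of the clique. These missed vertices
coincide, as otherwise there are three disjoint non-adjacent pairs. -/
lemma colorable_five_aux (hT : ¬ TripleC5 G.Adj) (hd : TriDense G)
    (hP : ∀ p : Fin 8 → Fin 8, Function.Injective p →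
      G.Adj (p 0) (p 1) ∨ G.Adj (p 2) (p 3) ∨ G.Adj (p 4) (p 5)) {q : Fin 8 → Fin 8}
    (hq : Function.Injective q)
    (h01 : ¬ G.Adj (q 0) (q 1)) (h23 : ¬ G.Adj (q 2) (q 3))
    (h1 : G.Adj (q 1) (q 4) ∧ G.Adj (q 1) (q 5) ∧ G.Adj (q 1) (q 6) ∧ G.Adj (q 1) (q 7))
    (h3 : G.Adj (q 3) (q 4) ∧ G.Adj (q 3) (q 5) ∧ G.Adj (q 3) (q 6) ∧ G.Adj (q 3) (q 7)) :
    False := by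
  have sy : ∀ x y, G.Adj x y → G.Adj y x := fun x y h => h.symm
  have Q := adj_of_disjoint_nonadj hP hq
  have hQ : ∀ a b c d : Fin 8, Function.Injective ![0, 1, 2, 3, a, b, c, d] →
      G.Adj (q a) (q b) := fun a b c d hi => Q 0 1 2 3 a b c d hi h01 h23
  have k6 : ∀ x y, G.Adj x y →
      (G.Adj x (q 4) ∧ G.Adj x (q 5) ∧ G.Adj x (q 6) ∧ G.Adj x (q 7)) →
      (G.Adj y (q 4) ∧ G.Adj y (q 5) ∧ G.Adj y (q 6) ∧ G.Adj y (q 7)) → False := by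
    rintro x y h ⟨x4, x5, x6, x7⟩ ⟨y4, y5, y6, y7⟩
    exact hT (TripleC5.of_K6 sy ⟨h, x4, y4⟩ ⟨⟨x5, x6, x7⟩, ⟨y5, y6, y7⟩,
      ⟨hQ 4 5 6 7 (by decide), hQ 4 6 5 7 (by decide), hQ 4 7 5 6 (by decide)⟩,
      hQ 5 6 4 7 (by decide), hQ 6 7 4 5 (by decide), hQ 5 7 4 6 (by decide)⟩)
  have h13 : ¬ G.Adj (q 1) (q 3) := fun h => k6 _ _ h h1 h3
  have h03 : G.Adj (q 0) (q 3) :=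
    hd.adj hq (fun h => h01 (sy _ _ h)) h13 (by decide) (by decide) (by decide)
  have h12 : G.Adj (q 1) (q 2) :=
    hd.adj hq (fun h => h13 (sy _ _ h)) (fun h => h23 (sy _ _ h)) (by decide) (by decide)
      (by decide)
  have n0 : ¬ (G.Adj (q 0) (q 4) ∧ G.Adj (q 0) (q 5) ∧ G.Adj (q 0) (q 6) ∧ G.Adj (q 0) (q 7)) :=
    fun h => k6 _ _ h03 h h3
  have n2 : ¬ (G.Adj (q 2) (q 4) ∧ G.Adj (q 2) (q 5) ∧ G.Adj (q 2) (q 6) ∧ G.Adj (q 2) (q 7)) :=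
    fun h => k6 _ _ h12 h1 h
  -- `q 0` and `q 2` both miss some vertex of the clique; it has to be the same one
  have key : ∀ x y z w : Fin 8, Function.Injective ![1, 3, 0, x, 2, y, z, w] →
      ¬ G.Adj (q 0) (q x) → G.Adj (q 2) (q y) :=
    fun x y z w hi h => Q 1 3 0 x 2 y z w hi h13 h
  have last : ∀ x y z w : Fin 8, Function.Injective ![0, 1, 2, 3, x, y, z, w] →
      ¬ G.Adj (q 0) (q x) → ¬ G.Adj (q 2) (q x) → False := fun x y z w hi h0 h2 =>
    false_of_common_miss hT hd hP (q := q ∘ ![0, 1, 2, 3, x, y, z, w]) (hq.comp hi) h01 h23 h13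
      h0 h2
  have l4 := last 4 5 6 7 (by decide)
  have l5 := last 5 4 6 7 (by decide)
  have l6 := last 6 4 5 7 (by decide)
  have l7 := last 7 4 5 6 (by decide)
  have k45 := key 4 5 6 7 (by decide)
  have k46 := key 4 6 5 7 (by decide)
  have k47 := key 4 7 5 6 (by decide)
  have k54 := key 5 4 6 7 (by decide)
  have k56 := key 5 6 4 7 (by decide)
  have k57 := key 5 7 4 6 (by decide)
  have k64 := key 6 4 5 7 (by decide)
  have k65 := key 6 5 4 7 (by decide)
  have k67 := key 6 7 4 5 (by decide)
  have k74 := key 7 4 5 6 (by decide)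
  have k75 := key 7 5 4 6 (by decide)
  have k76 := key 7 6 4 5 (by decide)
  clear last key k6 Q hQ hP
  grind only

/-- Given two disjoint non-adjacent pairs, but no three, one member of the first pair is joined to
all four vertices outside the pairs. -/
lemma complete_of_disjoint_nonadj (hd : TriDense G)
    (hP : ∀ p : Fin 8 → Fin 8, Function.Injective p →
      G.Adj (p 0) (p 1) ∨ G.Adj (p 2) (p 3) ∨ G.Adj (p 4) (p 5)) {q : Fin 8 → Fin 8}
    (hq : Function.Injective q)
    (h01 : ¬ G.Adj (q 0) (q 1)) (h23 : ¬ G.Adj (q 2) (q 3)) :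
    (G.Adj (q 1) (q 4) ∧ G.Adj (q 1) (q 5) ∧ G.Adj (q 1) (q 6) ∧ G.Adj (q 1) (q 7)) ∨
    (G.Adj (q 0) (q 4) ∧ G.Adj (q 0) (q 5) ∧ G.Adj (q 0) (q 6) ∧ G.Adj (q 0) (q 7)) := by
  have key : ∀ x y z w : Fin 8, Function.Injective ![2, 3, 0, x, 1, y, z, w] →
      ¬ G.Adj (q 0) (q x) → G.Adj (q 1) (q y) :=
    fun x y z w hi h => adj_of_disjoint_nonadj hP hq 2 3 0 x 1 y z w hi h23 h
  have dia : ∀ x : Fin 8, 0 ≠ x → 1 ≠ x → ¬ G.Adj (q 0) (q x) → G.Adj (q 1) (q x) :=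
    fun x h0 h1 h => hd.adj hq h01 h (by decide) h0 h1
  have l4 := dia 4 (by decide) (by decide)
  have l5 := dia 5 (by decide) (by decide)
  have l6 := dia 6 (by decide) (by decide)
  have l7 := dia 7 (by decide) (by decide)
  have k45 := key 4 5 6 7 (by decide)
  have k46 := key 4 6 5 7 (by decide)
  have k47 := key 4 7 5 6 (by decide)
  have k54 := key 5 4 6 7 (by decide)
  have k56 := key 5 6 4 7 (by decide)
  have k57 := key 5 7 4 6 (by decide)
  have k64 := key 6 4 5 7 (by decide)
  have k65 := key 6 5 4 7 (by decide)
  have k67 := key 6 7 4 5 (by decide)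
  have k74 := key 7 4 5 6 (by decide)
  have k75 := key 7 5 4 6 (by decide)
  have k76 := key 7 6 4 5 (by decide)
  clear key dia hP
  grind only

/-- If any two non-adjacent pairs meet, the graph contains a clique on six vertices. -/
lemma exists_clique_of_no_disjoint_nonadj
    (h2 : ¬ ∃ q : Fin 8 → Fin 8, Function.Injective q ∧ ¬ G.Adj (q 0) (q 1) ∧
      ¬ G.Adj (q 2) (q 3)) :
    ∃ q : Fin 8 → Fin 8, Function.Injective q ∧ ∀ a b c d e f : Fin 8,
      Function.Injective ![0, 1, a, b, c, d, e, f] → G.Adj (q a) (q b) := by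
  push Not at h2
  by_cases h1 : ∃ q : Fin 8 → Fin 8, Function.Injective q ∧ ¬ G.Adj (q 0) (q 1)
  · obtain ⟨q, hq, h01⟩ := h1
    exact ⟨q, hq, fun a b c d e f hi =>
      h2 (q ∘ ![0, 1, a, b, c, d, e, f]) (hq.comp hi) h01⟩
  · push Not at h1
    refine ⟨id, Function.injective_id, fun a b c d e f hi => ?_⟩
    exact h1 (![0, 1, a, b, c, d, e, f] ∘ ![2, 3, 4, 5, 6, 7, 0, 1]) (hi.comp (by decide))

lemma colorable_five_of_triDense (hT : ¬ TripleC5 G.Adj) (hd : TriDense G) : G.Colorable 5 := by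
  by_contra hcol
  have sy : ∀ x y, G.Adj x y → G.Adj y x := fun x y h => h.symm
  have hP : ∀ p : Fin 8 → Fin 8, Function.Injective p →
      G.Adj (p 0) (p 1) ∨ G.Adj (p 2) (p 3) ∨ G.Adj (p 4) (p 5) := by
    intro p hp
    by_contra h
    push Not at h
    exact hcol (colorable_22211 hp h.1 h.2.1 h.2.2)
  by_cases h2 : ∃ q : Fin 8 → Fin 8, Function.Injective q ∧ ¬ G.Adj (q 0) (q 1) ∧
      ¬ G.Adj (q 2) (q 3)
  · obtain ⟨q, hq, h01, h23⟩ := h2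
    have h10 : ¬ G.Adj (q 1) (q 0) := fun h => h01 (sy _ _ h)
    have h32 : ¬ G.Adj (q 3) (q 2) := fun h => h23 (sy _ _ h)
    have c2 := complete_of_disjoint_nonadj hd hP (q := q ∘ ![2, 3, 0, 1, 4, 5, 6, 7])
      (hq.comp (by decide)) h23 h01
    rcases complete_of_disjoint_nonadj hd hP hq h01 h23 with h1 | h0 <;> rcases c2 with h3 | h2
    · exact colorable_five_aux hT hd hP hq h01 h23 h1 h3
    · exact colorable_five_aux hT hd hP (q := q ∘ ![0, 1, 3, 2, 4, 5, 6, 7])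
        (hq.comp (by decide)) h01 h32 h1 h2
    · exact colorable_five_aux hT hd hP (q := q ∘ ![1, 0, 2, 3, 4, 5, 6, 7])
        (hq.comp (by decide)) h10 h23 h0 h3
    · exact colorable_five_aux hT hd hP (q := q ∘ ![1, 0, 3, 2, 4, 5, 6, 7])
        (hq.comp (by decide)) h10 h32 h0 h2
  · obtain ⟨q, hq, hQ⟩ := exists_clique_of_no_disjoint_nonadj h2
    exact hT (TripleC5.of_K6 (u := q 2) (v := q 3) (w := q 4) (a := q 5) (b := q 6) (c := q 7) sy
      ⟨hQ 2 3 4 5 6 7 (by decide), hQ 2 4 3 5 6 7 (by decide), hQ 3 4 2 5 6 7 (by decide)⟩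
      ⟨⟨hQ 2 5 4 3 6 7 (by decide), hQ 2 6 3 4 5 7 (by decide), hQ 2 7 3 4 5 6 (by decide)⟩,
      ⟨hQ 3 5 4 2 6 7 (by decide), hQ 3 6 2 4 5 7 (by decide), hQ 3 7 2 4 5 6 (by decide)⟩,
      ⟨hQ 4 5 3 2 6 7 (by decide), hQ 4 6 3 2 5 7 (by decide), hQ 4 7 3 2 5 6 (by decide)⟩,
      hQ 5 6 4 3 2 7 (by decide), hQ 6 7 2 3 4 5 (by decide), hQ 5 7 3 4 2 6 (by decide)⟩)

/-- A graph on eight vertices without `TripleC5` is `5`-colourable. -/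
lemma colorable_five (hT : ¬ TripleC5 G.Adj) : G.Colorable 5 := by
  rcases triDense_or G with hd | ⟨q, hq, i1, i2, i3⟩
  · exact colorable_five_of_triDense hT hd
  · exact colorable_five_of_indep hT hq i1 i2 i3

/-! ### Graphs without three independent vertices: four colours -/

/-- In a graph without three independent vertices an edge `v w` with five common neighbours gives a
cone over a closed `5`-walk: five vertices without an independent triple contain a triangle or a
`5`-cycle. -/
lemma ConeC5.of_five (hd : TriDense G) {v w : Fin 8} (hvw : G.Adj v w) (x : Fin 5 → Fin 8)
    (hx : Function.Injective x) (hv : ∀ i, G.Adj v (x i)) (hw : ∀ i, G.Adj w (x i)) :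
    ConeC5 G.Adj := by
  by_contra h5
  have sy : ∀ x y, G.Adj x y → G.Adj y x := fun x y h => h.symm
  have T : ∀ i j k : Fin 5, i ≠ j → i ≠ k → j ≠ k →
      G.Adj (x i) (x j) ∨ G.Adj (x i) (x k) ∨ G.Adj (x j) (x k) := fun i j k h1 h2 h3 =>
    hd _ _ _ (hx.ne h1) (hx.ne h2) (hx.ne h3)
  have K : ∀ i j k : Fin 5, ¬ (G.Adj (x i) (x j) ∧ G.Adj (x i) (x k) ∧ G.Adj (x j) (x k)) :=
    fun i j k h => h5 (ConeC5.of_K5 sy ⟨hvw, ⟨hv i, hv j, hv k⟩, ⟨hw i, hw j, hw k⟩, h.1, h.2.2,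
      h.2.1⟩)
  have C : ∀ i j k l m : Fin 5, ¬ (G.Adj (x i) (x j) ∧ G.Adj (x j) (x k) ∧ G.Adj (x k) (x l) ∧
      G.Adj (x l) (x m) ∧ G.Adj (x m) (x i)) :=
    fun i j k l m h => h5 ⟨v, w, x i, x j, x k, x l, x m, hvw, ⟨hv _, hv _, hv _, hv _, hv _⟩,
      ⟨hw _, hw _, hw _, hw _, hw _⟩, h.1, h.2.1, h.2.2.1, h.2.2.2.1, h.2.2.2.2⟩
  have s : ∀ i j : Fin 5, G.Adj (x i) (x j) ↔ G.Adj (x j) (x i) := fun i j => G.adj_comm _ _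
  have t1 := T 0 1 2 (by decide) (by decide) (by decide)
  have k1 := K 0 1 2
  have t2 := T 0 1 3 (by decide) (by decide) (by decide)
  have k2 := K 0 1 3
  have t3 := T 0 1 4 (by decide) (by decide) (by decide)
  have k3 := K 0 1 4
  have t4 := T 0 2 3 (by decide) (by decide) (by decide)
  have k4 := K 0 2 3
  have t5 := T 0 2 4 (by decide) (by decide) (by decide)
  have k5 := K 0 2 4
  have t6 := T 0 3 4 (by decide) (by decide) (by decide)
  have k6 := K 0 3 4
  have t7 := T 1 2 3 (by decide) (by decide) (by decide)
  have k7 := K 1 2 3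
  have t8 := T 1 2 4 (by decide) (by decide) (by decide)
  have k8 := K 1 2 4
  have t9 := T 1 3 4 (by decide) (by decide) (by decide)
  have k9 := K 1 3 4
  have t10 := T 2 3 4 (by decide) (by decide) (by decide)
  have k10 := K 2 3 4
  have s01 := s 0 1
  have s02 := s 0 2
  have s03 := s 0 3
  have s04 := s 0 4
  have s12 := s 1 2
  have s13 := s 1 3
  have s14 := s 1 4
  have s23 := s 2 3
  have s24 := s 2 4
  have s34 := s 3 4
  have c1 := C 0 1 2 3 4
  have c2 := C 0 1 2 4 3
  have c3 := C 0 1 3 2 4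
  have c4 := C 0 1 3 4 2
  have c5 := C 0 1 4 2 3
  have c6 := C 0 1 4 3 2
  have c7 := C 0 2 1 3 4
  have c8 := C 0 2 1 4 3
  have c9 := C 0 2 3 1 4
  have c10 := C 0 2 4 1 3
  have c11 := C 0 3 1 2 4
  have c12 := C 0 3 2 1 4
  clear T K C s hd h5 hx
  grind (splits := 50) only

/-- Suppose that there are three disjoint non-adjacent pairs, but no four, and in each pair one member
is joined to both remaining vertices `6` and `7` (as `exists_oriented` provides). Then `6` or `7` is
joined to all other vertices. The listed facts are the instances of the hypotheses from which this
follows propositionally. -/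
lemma universal_core (h5 : ¬ ConeC5 G.Adj) (hd : TriDense G) {q : Fin 8 → Fin 8}
    (hq : Function.Injective q)
    (hP : ∀ p : Fin 8 → Fin 8, Function.Injective p →
      G.Adj (p 0) (p 1) ∨ G.Adj (p 2) (p 3) ∨ G.Adj (p 4) (p 5) ∨ G.Adj (p 6) (p 7))
    (h01 : ¬ G.Adj (q 0) (q 1)) (h23 : ¬ G.Adj (q 2) (q 3)) (h45 : ¬ G.Adj (q 4) (q 5))
    (h67 : G.Adj (q 6) (q 7)) (h1 : G.Adj (q 1) (q 6) ∧ G.Adj (q 1) (q 7))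
    (h3 : G.Adj (q 3) (q 6) ∧ G.Adj (q 3) (q 7)) (h5' : G.Adj (q 5) (q 6) ∧ G.Adj (q 5) (q 7)) :
    (G.Adj (q 0) (q 6) ∧ G.Adj (q 2) (q 6) ∧ G.Adj (q 4) (q 6)) ∨
    (G.Adj (q 0) (q 7) ∧ G.Adj (q 2) (q 7) ∧ G.Adj (q 4) (q 7)) := by
  have sy : ∀ x y, G.Adj x y → G.Adj y x := fun x y h => h.symm
  obtain ⟨h16, h17⟩ := h1
  obtain ⟨h36, h37⟩ := h3
  obtain ⟨h56, h57⟩ := h5'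
  have D : ∀ a b c : Fin 8, a ≠ b → a ≠ c → b ≠ c →
      G.Adj (q a) (q b) ∨ G.Adj (q a) (q c) ∨ G.Adj (q b) (q c) := fun a b c hab hac hbc =>
    hd _ _ _ (hq.ne hab) (hq.ne hac) (hq.ne hbc)
  have PM : ∀ a b c d e f g h : Fin 8, Function.Injective ![a, b, c, d, e, f, g, h] →
      G.Adj (q a) (q b) ∨ G.Adj (q c) (q d) ∨ G.Adj (q e) (q f) ∨ G.Adj (q g) (q h) :=
    fun a b c d e f g h hi => hP (q ∘ ![a, b, c, d, e, f, g, h]) (hq.comp hi)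
  have K5 : ∀ a b c d e : Fin 8, ¬ (G.Adj (q a) (q b) ∧ G.Adj (q a) (q c) ∧ G.Adj (q a) (q d) ∧
      G.Adj (q a) (q e) ∧ G.Adj (q b) (q c) ∧ G.Adj (q b) (q d) ∧ G.Adj (q b) (q e) ∧
      G.Adj (q c) (q d) ∧ G.Adj (q c) (q e) ∧ G.Adj (q d) (q e)) := by
    rintro a b c d e ⟨ab, ac, ad, ae, bc, bd, be, cd, ce, de⟩
    exact h5 (ConeC5.of_K5 sy ⟨ab, ⟨ac, ad, ae⟩, ⟨bc, bd, be⟩, cd, de, ce⟩)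
  have F : ∀ v w a b c d e : Fin 8, Function.Injective ![a, b, c, d, e] →
      ¬ (G.Adj (q v) (q w) ∧ G.Adj (q v) (q a) ∧ G.Adj (q v) (q b) ∧ G.Adj (q v) (q c) ∧
        G.Adj (q v) (q d) ∧ G.Adj (q v) (q e) ∧ G.Adj (q w) (q a) ∧ G.Adj (q w) (q b) ∧
        G.Adj (q w) (q c) ∧ G.Adj (q w) (q d) ∧ G.Adj (q w) (q e)) := by
    rintro v w a b c d e hi ⟨h, va, vb, vc, vd, ve, wa, wb, wc, wd, we⟩
    refine h5 (ConeC5.of_five hd h (q ∘ ![a, b, c, d, e]) (hq.comp hi) (fun i => ?_)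
      (fun i => ?_)) <;> fin_cases i <;> assumption
  have s : ∀ i j, G.Adj (q i) (q j) ↔ G.Adj (q j) (q i) := fun i j => G.adj_comm _ _
  have s01 := s 0 1
  have s02 := s 0 2
  have s03 := s 0 3
  have s04 := s 0 4
  have s05 := s 0 5
  have s06 := s 0 6
  have s07 := s 0 7
  have s12 := s 1 2
  have s13 := s 1 3
  have s14 := s 1 4
  have s15 := s 1 5
  have s16 := s 1 6
  have s17 := s 1 7
  have s23 := s 2 3
  have s24 := s 2 4
  have s25 := s 2 5
  have s26 := s 2 6
  have s27 := s 2 7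
  have s34 := s 3 4
  have s35 := s 3 5
  have s36 := s 3 6
  have s37 := s 3 7
  have s45 := s 4 5
  have s46 := s 4 6
  have s47 := s 4 7
  have s56 := s 5 6
  have s57 := s 5 7
  have s67 := s 6 7
  have c1 := D 0 1 3 (by decide) (by decide) (by decide)
  have c2 := D 0 1 5 (by decide) (by decide) (by decide)
  have c3 := D 1 2 3 (by decide) (by decide) (by decide)
  have c4 := D 1 4 5 (by decide) (by decide) (by decide)
  have c5 := D 2 3 5 (by decide) (by decide) (by decide)
  have c6 := D 3 4 5 (by decide) (by decide) (by decide)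
  have c7 := PM 0 3 1 5 2 6 4 7 (by decide)
  have c8 := PM 0 3 1 5 2 7 4 6 (by decide)
  have c9 := PM 0 5 1 3 2 6 4 7 (by decide)
  have c10 := PM 0 5 1 3 2 7 4 6 (by decide)
  have c11 := PM 0 6 1 2 3 5 4 7 (by decide)
  have c12 := PM 0 6 1 3 2 5 4 7 (by decide)
  have c13 := PM 0 6 1 3 2 7 4 5 (by decide)
  have c14 := PM 0 6 1 4 2 7 3 5 (by decide)
  have c15 := PM 0 6 1 5 2 7 3 4 (by decide)
  have c16 := PM 0 6 1 5 2 3 4 7 (by decide)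
  have c17 := PM 0 7 1 2 3 5 4 6 (by decide)
  have c18 := PM 0 7 1 3 2 5 4 6 (by decide)
  have c19 := PM 0 7 1 3 2 6 4 5 (by decide)
  have c20 := PM 0 7 1 4 2 6 3 5 (by decide)
  have c21 := PM 0 7 1 5 2 6 3 4 (by decide)
  have c22 := PM 0 7 1 5 2 3 4 6 (by decide)
  have c23 := PM 0 1 2 6 3 5 4 7 (by decide)
  have c24 := PM 0 1 2 7 3 5 4 6 (by decide)
  have c25 := K5 1 3 4 6 7
  have c26 := K5 1 3 5 6 7
  have c27 := K5 0 3 5 6 7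
  have c28 := K5 1 2 5 6 7
  have c29 := F 6 7 1 2 3 4 5 (by decide)
  have c30 := F 6 7 0 1 3 4 5 (by decide)
  have c31 := F 3 7 0 1 4 5 6 (by decide)
  have c32 := F 1 7 2 3 4 5 6 (by decide)
  have c34 := F 3 6 0 1 4 5 7 (by decide)
  have c35 := F 1 6 2 3 4 5 7 (by decide)
  have c37 := F 5 7 0 1 2 3 6 (by decide)
  have c38 := F 5 6 0 1 2 3 7 (by decide)
  have c39 := F 6 7 0 1 2 3 5 (by decide)
  clear D PM K5 F s hP hd h5 hq
  grind (splits := 50) only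

/-- Here `7` is joined to all vertices, `0` misses exactly `1` and `2`, and `3, 4` and `5, 6` are
opposite pairs of the four other vertices. Each choice of edges between `{1, 2}` and `{3, 4, 5, 6}`
produces an independent triple, a `K₅`, or a cone over a Moser spindle. -/
lemma moser_core (h5 : ¬ ConeC5 G.Adj) (hM : ¬ ConeMoser G.Adj) (hd : TriDense G)
    {q : Fin 8 → Fin 8} (hq : Function.Injective q) (hu : ∀ i, i ≠ 7 → G.Adj (q 7) (q i))
    (h01 : ¬ G.Adj (q 0) (q 1)) (h02 : ¬ G.Adj (q 0) (q 2)) (h03 : G.Adj (q 0) (q 3))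
    (h04 : G.Adj (q 0) (q 4)) (h05 : G.Adj (q 0) (q 5)) (h06 : G.Adj (q 0) (q 6))
    (h34 : ¬ G.Adj (q 3) (q 4)) (h56 : ¬ G.Adj (q 5) (q 6)) (h35 : G.Adj (q 3) (q 5))
    (h46 : G.Adj (q 4) (q 6)) : False := by
  have sy : ∀ x y, G.Adj x y → G.Adj y x := fun x y h => h.symm
  have D : ∀ a b c : Fin 8, a ≠ b → a ≠ c → b ≠ c →
      G.Adj (q a) (q b) ∨ G.Adj (q a) (q c) ∨ G.Adj (q b) (q c) := fun a b c hab hac hbc =>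
    hd _ _ _ (hq.ne hab) (hq.ne hac) (hq.ne hbc)
  have h12 : G.Adj (q 1) (q 2) := hd.adj hq h01 h02 (by decide) (by decide) (by decide)
  have K5 : ∀ a b c d : Fin 8, a ≠ 7 ∧ b ≠ 7 ∧ c ≠ 7 ∧ d ≠ 7 → ¬ (G.Adj (q a) (q b) ∧
      G.Adj (q a) (q c) ∧ G.Adj (q a) (q d) ∧ G.Adj (q b) (q c) ∧ G.Adj (q b) (q d) ∧
      G.Adj (q c) (q d)) := by
    rintro a b c d ⟨na, nb, nc, nd⟩ ⟨ab, ac, ad, bc, bd, cd⟩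
    exact h5 (ConeC5.of_K5 sy ⟨hu a na, ⟨hu b nb, hu c nc, hu d nd⟩, ⟨ab, ac, ad⟩, bc, cd, bd⟩)
  have M : ∀ x a b y c d z : Fin 8, x ≠ 7 ∧ a ≠ 7 ∧ b ≠ 7 ∧ y ≠ 7 ∧ c ≠ 7 ∧ d ≠ 7 ∧ z ≠ 7 →
      ¬ (G.Adj (q x) (q a) ∧ G.Adj (q x) (q b) ∧ G.Adj (q a) (q b) ∧ G.Adj (q a) (q y) ∧
        G.Adj (q b) (q y) ∧ G.Adj (q x) (q c) ∧ G.Adj (q x) (q d) ∧ G.Adj (q c) (q d) ∧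
        G.Adj (q c) (q z) ∧ G.Adj (q d) (q z) ∧ G.Adj (q y) (q z)) := by
    rintro x a b y c d z ⟨nx, na, nb, ny, nc, nd, nz⟩ ⟨xa, xb, ab, ay, yb, xc, xd, cd, cz, dz, yz⟩
    exact hM ⟨q 7, q x, q a, q b, q y, q c, q d, q z, ⟨hu x nx, hu a na, hu b nb, hu y ny, hu c nc,
      hu d nd, hu z nz⟩, ⟨xa, xb, ab, ay, yb⟩, ⟨xc, xd, cd, cz, dz⟩, yz⟩
  have s : ∀ i j, G.Adj (q i) (q j) ↔ G.Adj (q j) (q i) := fun i j => G.adj_comm _ _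
  have s01 := s 0 1
  have s02 := s 0 2
  have s03 := s 0 3
  have s04 := s 0 4
  have s05 := s 0 5
  have s06 := s 0 6
  have s07 := s 0 7
  have s12 := s 1 2
  have s13 := s 1 3
  have s14 := s 1 4
  have s15 := s 1 5
  have s16 := s 1 6
  have s17 := s 1 7
  have s23 := s 2 3
  have s24 := s 2 4
  have s25 := s 2 5
  have s26 := s 2 6
  have s27 := s 2 7
  have s34 := s 3 4
  have s35 := s 3 5
  have s36 := s 3 6
  have s37 := s 3 7
  have s45 := s 4 5
  have s46 := s 4 6
  have s47 := s 4 7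
  have s56 := s 5 6
  have s57 := s 5 7
  have s67 := s 6 7
  have m0 := M 0 3 6 2 4 5 1 (by decide)
  have m1 := M 0 3 6 1 4 5 2 (by decide)
  have m2 := M 4 0 5 3 2 6 1 (by decide)
  have m3 := M 4 0 5 3 1 6 2 (by decide)
  have m4 := M 3 0 5 4 1 2 6 (by decide)
  have m5 := M 5 0 4 6 1 3 2 (by decide)
  have m6 := M 5 0 4 6 2 3 1 (by decide)
  have m7 := M 6 0 3 5 2 4 1 (by decide)
  have m8 := M 6 0 3 5 1 4 2 (by decide)
  have m9 := M 4 0 6 3 1 2 5 (by decide)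
  have m10 := M 3 0 6 4 1 5 2 (by decide)
  have m11 := M 3 0 6 4 2 5 1 (by decide)
  have m12 := M 0 3 5 1 4 6 2 (by decide)
  have m13 := M 0 3 5 2 4 6 1 (by decide)
  have t0 := D 1 3 4 (by decide) (by decide) (by decide)
  have t1 := D 1 3 6 (by decide) (by decide) (by decide)
  have t2 := D 1 4 5 (by decide) (by decide) (by decide)
  have t3 := D 1 5 6 (by decide) (by decide) (by decide)
  have t4 := D 2 3 4 (by decide) (by decide) (by decide)
  have t5 := D 2 3 6 (by decide) (by decide) (by decide)
  have t6 := D 2 4 5 (by decide) (by decide) (by decide)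
  have t7 := D 2 5 6 (by decide) (by decide) (by decide)
  have k4 := K5 1 2 4 6 (by decide)
  have k3 := K5 1 2 3 5 (by decide)
  clear D M K5 s hd h5 hq hu hM
  grind (splits := 50) only

/-- Without independent triples, a vertex `t` joined to all others yields one of the two patterns.
By the handshake lemma some vertex `x ≠ t` has odd degree. If `x` has at least five neighbours
besides `t`, there is a `ConeC5`; if it misses at least four vertices, these form a `K₅` together
with `t`. So `x` has degree five, and `moser_core` applies. -/
lemma false_of_universal (h5 : ¬ ConeC5 G.Adj) (hM : ¬ ConeMoser G.Adj) (hd : TriDense G)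
    {t : Fin 8} (ht : ∀ x, x ≠ t → G.Adj t x) : False := by
  classical
  have sy : ∀ x y, G.Adj x y → G.Adj y x := fun x y h => h.symm
  have degt : G.degree t = 7 := by
    have : G.neighborFinset t = Finset.univ.erase t := by
      ext x
      simp only [SimpleGraph.mem_neighborFinset, Finset.mem_erase, Finset.mem_univ, and_true]
      exact ⟨fun h => h.ne', ht x⟩
    rw [← SimpleGraph.card_neighborFinset_eq_degree, this]
    simp
  obtain ⟨x, hxt, hx⟩ := G.exists_ne_odd_degree_of_exists_odd_degree t
    (by rw [degt]; decide)
  -- the neighbours of `x` other than `t`, and its non-neighbours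
  set N := (G.neighborFinset x).erase t with hN
  set M := (Finset.univ \ G.neighborFinset x).erase x with hMd
  have htx : G.Adj x t := sy _ _ (ht x hxt)
  have memN : ∀ v, v ∈ N ↔ v ≠ t ∧ G.Adj x v := by intro v; simp [hN]
  have memM : ∀ v, v ∈ M ↔ v ≠ x ∧ ¬ G.Adj x v := by intro v; simp [hMd]
  have cN : N.card + 1 = G.degree x := by
    rw [hN, Finset.card_erase_add_one (by simpa using htx),
      SimpleGraph.card_neighborFinset_eq_degree]
  have cM : M.card + 1 + G.degree x = 8 := by
    rw [hMd, Finset.card_erase_add_one (by simp), ← SimpleGraph.card_neighborFinset_eq_degree,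
      Finset.card_sdiff_add_card_eq_card (Finset.subset_univ _)]
    simp
  have pick : ∀ (s : Finset (Fin 8)) (k : ℕ), k ≤ s.card →
      ∃ f : Fin k → Fin 8, Function.Injective f ∧ ∀ i, f i ∈ s := by
    intro s k hk
    exact ⟨fun i => s.orderEmbOfFin rfl (Fin.castLE hk i),
      fun a b h => by simpa using h, fun i => Finset.orderEmbOfFin_mem _ _ _⟩
  have cN' : N.card ≤ 4 := by
    by_contra h
    obtain ⟨f, hf, hfN⟩ := pick N 5 (by omega)
    exact h5 (ConeC5.of_five hd (ht x hxt) f hf (fun i => ht _ ((memN _).1 (hfN i)).1)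
      (fun i => ((memN _).1 (hfN i)).2))
  have cM' : M.card ≤ 3 := by
    by_contra h
    obtain ⟨f, hf, hfM⟩ := pick M 4 (by omega)
    have cl : ∀ i j, i ≠ j → G.Adj (f i) (f j) := by
      intro i j hij
      have hi := (memM _).1 (hfM i)
      have hj := (memM _).1 (hfM j)
      rcases hd x (f i) (f j) hi.1.symm hj.1.symm (hf.ne hij) with h | h | h
      · exact absurd h hi.2
      · exact absurd h hj.2
      · exact h
    have cu : ∀ i, G.Adj t (f i) := fun i => ht _ fun h => ((memM _).1 (hfM i)).2 (h ▸ htx)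
    exact h5 (ConeC5.of_K5 sy ⟨cu 0, ⟨cu 1, cu 2, cu 3⟩,
      ⟨cl 0 1 (by decide), cl 0 2 (by decide), cl 0 3 (by decide)⟩, cl 1 2 (by decide),
      cl 2 3 (by decide), cl 1 3 (by decide)⟩)
  obtain ⟨m, hm⟩ := hx
  obtain ⟨n, hn, hnN⟩ := pick N 4 (by omega)
  obtain ⟨z, hz, hzM⟩ := pick M 2 (by omega)
  have nN : N = Finset.univ.image n := by
    refine (Finset.eq_of_subset_of_card_le (fun v hv => ?_) ?_).symm
    · obtain ⟨i, -, rfl⟩ := Finset.mem_image.1 hv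
      exact hnN i
    · rw [Finset.card_image_of_injective _ hn]; simp; omega
  have zM : M = Finset.univ.image z := by
    refine (Finset.eq_of_subset_of_card_le (fun v hv => ?_) ?_).symm
    · obtain ⟨i, -, rfl⟩ := Finset.mem_image.1 hv
      exact hzM i
    · rw [Finset.card_image_of_injective _ hz]; simp; omega
  let q : Fin 8 → Fin 8 := ![x, z 0, z 1, n 0, n 1, n 2, n 3, t]
  have hq : Function.Injective q := by
    refine Finite.injective_iff_surjective.2 fun v => ?_
    by_cases hvt : v = t
    · exact ⟨7, hvt.symm⟩
    by_cases hvx : v = x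
    · exact ⟨0, hvx.symm⟩
    by_cases hv : G.Adj x v
    · have : v ∈ N := (memN v).2 ⟨hvt, hv⟩
      rw [nN] at this
      obtain ⟨i, -, rfl⟩ := Finset.mem_image.1 this
      exact ⟨(![3, 4, 5, 6] : Fin 4 → Fin 8) i, by fin_cases i <;> rfl⟩
    · have : v ∈ M := (memM v).2 ⟨hvx, hv⟩
      rw [zM] at this
      obtain ⟨i, -, rfl⟩ := Finset.mem_image.1 this
      exact ⟨(![1, 2] : Fin 2 → Fin 8) i, by fin_cases i <;> rfl⟩
  have hu : ∀ i, i ≠ 7 → G.Adj (q 7) (q i) := fun i hi => ht _ (hq.ne hi)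
  have h01 : ¬ G.Adj (q 0) (q 1) := ((memM _).1 (hzM 0)).2
  have h02 : ¬ G.Adj (q 0) (q 2) := ((memM _).1 (hzM 1)).2
  have h03 : G.Adj (q 0) (q 3) := ((memN _).1 (hnN 0)).2
  have h04 : G.Adj (q 0) (q 4) := ((memN _).1 (hnN 1)).2
  have h05 : G.Adj (q 0) (q 5) := ((memN _).1 (hnN 2)).2
  have h06 : G.Adj (q 0) (q 6) := ((memN _).1 (hnN 3)).2
  have K : ∀ a b c : Fin 8, a ≠ 7 → b ≠ 7 → c ≠ 7 → G.Adj (q 0) (q a) → G.Adj (q 0) (q b) →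
      G.Adj (q 0) (q c) → ¬ (G.Adj (q a) (q b) ∧ G.Adj (q a) (q c) ∧ G.Adj (q b) (q c)) := by
    rintro a b c na nb nc ha hb hc ⟨ab, ac, bc⟩
    exact h5 (ConeC5.of_K5 sy ⟨hu 0 (by decide), ⟨hu a na, hu b nb, hu c nc⟩, ⟨ha, hb, hc⟩, ab, bc,
      ac⟩)
  have D : ∀ a b c : Fin 8, a ≠ b → a ≠ c → b ≠ c →
      G.Adj (q a) (q b) ∨ G.Adj (q a) (q c) ∨ G.Adj (q b) (q c) := fun a b c hab hac hbc =>
    hd _ _ _ (hq.ne hab) (hq.ne hac) (hq.ne hbc)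
  -- no three of the four common neighbours of `t` and `x` form a triangle or an independent set, so
  -- they can be arranged as required by `moser_core`
  have fin : ∀ p : Fin 8 → Fin 8, Function.Injective p → p 0 = 0 → p 1 = 1 → p 2 = 2 → p 7 = 7 →
      (p 3 = 3 ∨ p 3 = 4 ∨ p 3 = 5 ∨ p 3 = 6) → (p 4 = 3 ∨ p 4 = 4 ∨ p 4 = 5 ∨ p 4 = 6) →
      (p 5 = 3 ∨ p 5 = 4 ∨ p 5 = 5 ∨ p 5 = 6) → (p 6 = 3 ∨ p 6 = 4 ∨ p 6 = 5 ∨ p 6 = 6) →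
      ¬ (¬ G.Adj (q (p 3)) (q (p 4)) ∧ ¬ G.Adj (q (p 5)) (q (p 6)) ∧
        G.Adj (q (p 3)) (q (p 5)) ∧ G.Adj (q (p 4)) (q (p 6))) := by
    rintro p hp p0 p1 p2 p7 p3 p4 p5 p6 ⟨e1, e2, e3, e4⟩
    have N0 : ∀ i, i = 3 ∨ i = 4 ∨ i = 5 ∨ i = 6 → G.Adj (q 0) (q i) := by
      rintro i (rfl | rfl | rfl | rfl) <;> assumption
    refine moser_core h5 hM hd (q := q ∘ p) (hq.comp hp) ?_ ?_ ?_ ?_ ?_ ?_ ?_ e1 e2 e3 e4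
    · intro i hi
      simp only [Function.comp, p7]
      exact hu _ (p7 ▸ hp.ne hi)
    all_goals simp only [Function.comp, p0, p1, p2]
    · exact h01
    · exact h02
    · exact N0 _ p3
    · exact N0 _ p4
    · exact N0 _ p5
    · exact N0 _ p6
  have f1 := fin ![0, 1, 2, 3, 4, 5, 6, 7] (by decide) rfl rfl rfl rfl (by decide) (by decide) (by decide) (by decide)
  have f2 := fin ![0, 1, 2, 3, 4, 6, 5, 7] (by decide) rfl rfl rfl rfl (by decide) (by decide) (by decide) (by decide)
  have f3 := fin ![0, 1, 2, 3, 5, 4, 6, 7] (by decide) rfl rfl rfl rfl (by decide) (by decide) (by decide) (by decide)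
  have f4 := fin ![0, 1, 2, 3, 5, 6, 4, 7] (by decide) rfl rfl rfl rfl (by decide) (by decide) (by decide) (by decide)
  have f5 := fin ![0, 1, 2, 3, 6, 4, 5, 7] (by decide) rfl rfl rfl rfl (by decide) (by decide) (by decide) (by decide)
  have f6 := fin ![0, 1, 2, 3, 6, 5, 4, 7] (by decide) rfl rfl rfl rfl (by decide) (by decide) (by decide) (by decide)
  simp only [Matrix.cons_val] at f1 f2 f3 f4 f5 f6
  have k1 := K 3 4 5 (by decide) (by decide) (by decide) h03 h04 h05
  have k2 := K 3 4 6 (by decide) (by decide) (by decide) h03 h04 h06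
  have k3 := K 3 5 6 (by decide) (by decide) (by decide) h03 h05 h06
  have k4 := K 4 5 6 (by decide) (by decide) (by decide) h04 h05 h06
  have d1 := D 3 4 5 (by decide) (by decide) (by decide)
  have d2 := D 3 4 6 (by decide) (by decide) (by decide)
  have d3 := D 3 5 6 (by decide) (by decide) (by decide)
  have d4 := D 4 5 6 (by decide) (by decide) (by decide)
  have s34 := G.adj_comm (q 3) (q 4)
  have s35 := G.adj_comm (q 3) (q 5)
  have s36 := G.adj_comm (q 3) (q 6)
  have s45 := G.adj_comm (q 4) (q 5)
  have s46 := G.adj_comm (q 4) (q 6)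
  have s56 := G.adj_comm (q 5) (q 6)
  clear_value q
  clear fin K D hu hq nN zM hzM hnN cM' cN' pick memM memN hd h5 hM
  grind (splits := 50) only

/-- Given three disjoint non-adjacent pairs, but no four, one member of each pair is joined to both
vertices outside the pairs. -/
lemma pair_complete (hd : TriDense G)
    (hP : ∀ p : Fin 8 → Fin 8, Function.Injective p →
      G.Adj (p 0) (p 1) ∨ G.Adj (p 2) (p 3) ∨ G.Adj (p 4) (p 5) ∨ G.Adj (p 6) (p 7))
    {q : Fin 8 → Fin 8} (hq : Function.Injective q) (h01 : ¬ G.Adj (q 0) (q 1))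
    (h23 : ¬ G.Adj (q 2) (q 3)) (h45 : ¬ G.Adj (q 4) (q 5)) :
    (G.Adj (q 1) (q 6) ∧ G.Adj (q 1) (q 7)) ∨ (G.Adj (q 0) (q 6) ∧ G.Adj (q 0) (q 7)) := by
  have a := hP (q ∘ ![2, 3, 4, 5, 0, 6, 1, 7]) (hq.comp (by decide))
  have b := hP (q ∘ ![2, 3, 4, 5, 0, 7, 1, 6]) (hq.comp (by decide))
  have c := hd _ _ _ (hq.ne (show (0 : Fin 8) ≠ 1 by decide)) (hq.ne (show (0 : Fin 8) ≠ 6 by decide))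
    (hq.ne (show (1 : Fin 8) ≠ 6 by decide))
  have d := hd _ _ _ (hq.ne (show (0 : Fin 8) ≠ 1 by decide)) (hq.ne (show (0 : Fin 8) ≠ 7 by decide))
    (hq.ne (show (1 : Fin 8) ≠ 7 by decide))
  simp only [Function.comp, Matrix.cons_val] at a b
  clear hP hd
  tauto

/-- The labels within three disjoint non-adjacent pairs can be chosen so that the second member of
each is joined to both vertices outside the pairs. -/
lemma exists_oriented (hd : TriDense G)
    (hP : ∀ p : Fin 8 → Fin 8, Function.Injective p →
      G.Adj (p 0) (p 1) ∨ G.Adj (p 2) (p 3) ∨ G.Adj (p 4) (p 5) ∨ G.Adj (p 6) (p 7))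
    {q : Fin 8 → Fin 8} (hq : Function.Injective q) (h01 : ¬ G.Adj (q 0) (q 1))
    (h23 : ¬ G.Adj (q 2) (q 3)) (h45 : ¬ G.Adj (q 4) (q 5)) :
    ∃ q : Fin 8 → Fin 8, Function.Injective q ∧ ¬ G.Adj (q 0) (q 1) ∧ ¬ G.Adj (q 2) (q 3) ∧
      ¬ G.Adj (q 4) (q 5) ∧ (G.Adj (q 1) (q 6) ∧ G.Adj (q 1) (q 7)) ∧
      (G.Adj (q 3) (q 6) ∧ G.Adj (q 3) (q 7)) ∧ (G.Adj (q 5) (q 6) ∧ G.Adj (q 5) (q 7)) := by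
  have h10 : ¬ G.Adj (q 1) (q 0) := fun h => h01 h.symm
  have h32 : ¬ G.Adj (q 3) (q 2) := fun h => h23 h.symm
  have h54 : ¬ G.Adj (q 5) (q 4) := fun h => h45 h.symm
  have A := pair_complete hd hP hq h01 h23 h45
  have B := pair_complete hd hP (q := q ∘ ![2, 3, 0, 1, 4, 5, 6, 7]) (hq.comp (by decide)) h23 h01
    h45
  have C := pair_complete hd hP (q := q ∘ ![4, 5, 0, 1, 2, 3, 6, 7]) (hq.comp (by decide)) h45 h01
    h23
  rcases A with a | a <;> rcases B with b | b <;> rcases C with c | c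
  · exact ⟨q, hq, h01, h23, h45, a, b, c⟩
  · exact ⟨q ∘ ![0, 1, 2, 3, 5, 4, 6, 7], hq.comp (by decide), h01, h23, h54, a, b, c⟩
  · exact ⟨q ∘ ![0, 1, 3, 2, 4, 5, 6, 7], hq.comp (by decide), h01, h32, h45, a, b, c⟩
  · exact ⟨q ∘ ![0, 1, 3, 2, 5, 4, 6, 7], hq.comp (by decide), h01, h32, h54, a, b, c⟩
  · exact ⟨q ∘ ![1, 0, 2, 3, 4, 5, 6, 7], hq.comp (by decide), h10, h23, h45, a, b, c⟩
  · exact ⟨q ∘ ![1, 0, 2, 3, 5, 4, 6, 7], hq.comp (by decide), h10, h23, h54, a, b, c⟩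
  · exact ⟨q ∘ ![1, 0, 3, 2, 4, 5, 6, 7], hq.comp (by decide), h10, h32, h45, a, b, c⟩
  · exact ⟨q ∘ ![1, 0, 3, 2, 5, 4, 6, 7], hq.comp (by decide), h10, h32, h54, a, b, c⟩

/-- In a graph without independent triples that is not `4`-colourable there are at most three disjoint
non-adjacent pairs. With exactly three some vertex is joined to all others, and with fewer there is
a `K₅`. -/
lemma colorable_four_of_triDense (h5 : ¬ ConeC5 G.Adj) (hM : ¬ ConeMoser G.Adj)
    (hd : TriDense G) : G.Colorable 4 := by
  by_contra hcol
  have sy : ∀ x y, G.Adj x y → G.Adj y x := fun x y h => h.symm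
  have hPM : ∀ p : Fin 8 → Fin 8, Function.Injective p →
      G.Adj (p 0) (p 1) ∨ G.Adj (p 2) (p 3) ∨ G.Adj (p 4) (p 5) ∨ G.Adj (p 6) (p 7) := by
    intro p hp
    by_contra h
    push Not at h
    exact hcol (colorable_2222 hp h.1 h.2.1 h.2.2.1 h.2.2.2)
  by_cases h3 : ∃ q : Fin 8 → Fin 8, Function.Injective q ∧ ¬ G.Adj (q 0) (q 1) ∧
      ¬ G.Adj (q 2) (q 3) ∧ ¬ G.Adj (q 4) (q 5)
  · obtain ⟨q₀, hq₀, a, b, c⟩ := h3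
    obtain ⟨q, hq, h01, h23, h45, h1, h3, h5'⟩ := exists_oriented hd hPM hq₀ a b c
    have h67 : G.Adj (q 6) (q 7) := by
      rcases hPM q hq with h | h | h | h
      · exact absurd h h01
      · exact absurd h h23
      · exact absurd h h45
      · exact h
    have hs : Function.Surjective q := Finite.injective_iff_surjective.1 hq
    rcases universal_core h5 hd hq hPM h01 h23 h45 h67 h1 h3 h5' with ⟨a0, a2, a4⟩ | ⟨a0, a2, a4⟩
    · refine false_of_universal h5 hM hd (t := q 6) fun x hx => ?_
      obtain ⟨i, rfl⟩ := hs x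
      apply sy
      fin_cases i <;> first
        | exact absurd rfl hx | assumption | exact h1.1 | exact h3.1 | exact h5'.1 | exact sy _ _ h67
    · refine false_of_universal h5 hM hd (t := q 7) fun x hx => ?_
      obtain ⟨i, rfl⟩ := hs x
      apply sy
      fin_cases i <;> first
        | exact absurd rfl hx | assumption | exact h1.2 | exact h3.2 | exact h5'.2
  · have hP : ∀ p : Fin 8 → Fin 8, Function.Injective p →
        G.Adj (p 0) (p 1) ∨ G.Adj (p 2) (p 3) ∨ G.Adj (p 4) (p 5) := by
      intro p hp
      by_contra h
      push Not at h
      exact h3 ⟨p, hp, h⟩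
    by_cases h2 : ∃ q : Fin 8 → Fin 8, Function.Injective q ∧ ¬ G.Adj (q 0) (q 1) ∧
      ¬ G.Adj (q 2) (q 3)
    · obtain ⟨q, hq, h01, h23⟩ := h2
      have hQ : ∀ a b c d : Fin 8, Function.Injective ![0, 1, 2, 3, a, b, c, d] →
        G.Adj (q a) (q b) := fun a b c d hi =>
          adj_of_disjoint_nonadj hP hq 0 1 2 3 a b c d hi h01 h23
      rcases complete_of_disjoint_nonadj hd hP hq h01 h23 with ⟨a4, a5, a6, a7⟩ | ⟨a4, a5, a6, a7⟩ <;>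
      exact h5 (ConeC5.of_K5 sy ⟨a4, ⟨a5, a6, a7⟩,
        ⟨hQ 4 5 6 7 (by decide), hQ 4 6 5 7 (by decide), hQ 4 7 5 6 (by decide)⟩,
        hQ 5 6 4 7 (by decide), hQ 6 7 4 5 (by decide), hQ 5 7 4 6 (by decide)⟩)
    · obtain ⟨q, hq, hQ⟩ := exists_clique_of_no_disjoint_nonadj h2
      exact h5 (ConeC5.of_K5 (v := q 2) (w := q 3) (a := q 4) (b := q 5) (c := q 6) sy
        ⟨hQ 2 3 4 5 6 7 (by decide),
        ⟨hQ 2 4 3 5 6 7 (by decide), hQ 2 5 4 3 6 7 (by decide), hQ 2 6 3 4 5 7 (by decide)⟩,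
        ⟨hQ 3 4 2 5 6 7 (by decide), hQ 3 5 4 2 6 7 (by decide), hQ 3 6 2 4 5 7 (by decide)⟩,
        hQ 4 5 3 2 6 7 (by decide), hQ 5 6 4 3 2 7 (by decide), hQ 4 6 3 2 5 7 (by decide)⟩)

/-- A graph on eight vertices without `ConeC5`, `ConeMoser` and `ConeTri` is `4`-colourable. -/
lemma colorable_four (h5 : ¬ ConeC5 G.Adj) (hM : ¬ ConeMoser G.Adj) (ht : ¬ ConeTri G.Adj) :
    G.Colorable 4 := by
  rcases triDense_or G with hd | ⟨q, hq, i1, i2, i3⟩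
  · exact colorable_four_of_triDense h5 hM hd
  · exact colorable_four_of_indep h5 ht hq i1 i2 i3

end Colouring

/-! ### Columns and their codes -/

/-- Columns `x` and `y` are qualitatively independent: every pair of symbols occurs in some row. -/
def QI {ι : Type*} (x y : ι → Fin 3) : Prop := ∀ a b, ∃ r, x r = a ∧ y r = b

/-- A column over three symbols as three bit masks: bit `i` of component `a` says that the entry in
row `i` is `a`. This makes independence of columns a matter of nine bitwise conjunctions. -/
abbrev Code := ℕ × ℕ × ℕ

/-- Add the entry of row `n`. -/
def Code.ext (n : ℕ) (p : Code) : Fin 3 → Code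
  | 0 => (p.1 ||| 2 ^ n, p.2.1, p.2.2)
  | 1 => (p.1, p.2.1 ||| 2 ^ n, p.2.2)
  | 2 => (p.1, p.2.1, p.2.2 ||| 2 ^ n)

/-- The code of the first `n` entries of a column. -/
def Code.of : ℕ → (ℕ → Fin 3) → Code
  | 0, _ => (0, 0, 0)
  | n + 1, X => (Code.of n X).ext n (X n)

/-- Independence of the coded columns: each mask of `p` meets each mask of `q`. -/
def Code.meet (p q : Code) : Bool :=
  Nat.ble 1 (Nat.land p.1 q.1) && (Nat.ble 1 (Nat.land p.1 q.2.1) && (Nat.ble 1 (Nat.land p.1 q.2.2) &&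
  (Nat.ble 1 (Nat.land p.2.1 q.1) && (Nat.ble 1 (Nat.land p.2.1 q.2.1) && (Nat.ble 1 (Nat.land p.2.1 q.2.2) &&
  (Nat.ble 1 (Nat.land p.2.2 q.1) && (Nat.ble 1 (Nat.land p.2.2 q.2.1) && Nat.ble 1 (Nat.land p.2.2 q.2.2))))))))

/-- The codes of all columns with `k + 3` rows that start with the entries `0, 1, 2`. -/
def Code.all : ℕ → List Code
  | 0 => [(1, 2, 4)]
  | k + 1 => (Code.all k).flatMap fun p => [p.ext (k + 3) 0, p.ext (k + 3) 1, p.ext (k + 3) 2]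

/-- The relation `Code.meet` has no closed walk of length five in `K`. -/
def noC5 (K : List Code) : Bool :=
  K.all fun a => K.all fun b => !a.meet b || K.all fun c => !b.meet c ||
    K.all fun d => !c.meet d || K.all fun e => !(d.meet e && e.meet a)

/-- The normalised first column `0 0 0 1 1 1 2 2 2 2 a`. -/
def rowV (a : Fin 3) : ℕ → Fin 3 := fun i => if i < 9 then Fin.ofNat 3 (i / 3) else if i = 9 then 2 else a
/-- The normalised second column `0 1 2 0 1 2 0 1 2 2 b`. -/
def rowW (b : Fin 3) : ℕ → Fin 3 := fun i => if i < 9 then Fin.ofNat 3 i else if i = 9 then 2 else b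

/-- The codes of the columns with first entries `0, 1, 2` independent of `rowV a`. -/
def codesV (N : ℕ) (a : Fin 3) : List Code :=
  (Code.all (N - 3)).filter (Code.of N (rowV a)).meet
/-- The codes among `codesV N a` that are also independent of `rowW b`. -/
def codesVW (N : ℕ) (a b : Fin 3) : List Code :=
  (codesV N a).filter (Code.of N (rowW b)).meet


/-- The component of a code belonging to a symbol. -/
def Code.get (p : Code) : Fin 3 → ℕ := ![p.1, p.2.1, p.2.2]

lemma Code.testBit_ext (n : ℕ) (p : Code) (a b : Fin 3) (i : ℕ) :
    ((p.ext n a).get b).testBit i = ((p.get b).testBit i || decide (i = n ∧ a = b)) := by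
  fin_cases a <;> fin_cases b <;> simp [Code.ext, Code.get, Nat.testBit_two_pow, eq_comm]

lemma Code.testBit_of (n : ℕ) (X : ℕ → Fin 3) (a : Fin 3) (i : ℕ) :
    ((Code.of n X).get a).testBit i = decide (i < n ∧ X i = a) := by
  induction n with
  | zero => fin_cases a <;> simp [Code.of, Code.get]
  | succ n ih =>
    rw [Code.of, Code.testBit_ext, ih, ← Bool.decide_or]
    congr 1
    grind

lemma Code.meet_of {n : ℕ} {X Y : ℕ → Fin 3}
    (h : ∀ a b, ∃ i < n, X i = a ∧ Y i = b) : (Code.of n X).meet (Code.of n Y) = true := by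
  have key : ∀ a b, Nat.ble 1 (Nat.land ((Code.of n X).get a) ((Code.of n Y).get b)) = true := by
    intro a b
    obtain ⟨i, hi, hX, hY⟩ := h a b
    rw [Nat.ble_eq, Nat.one_le_iff_ne_zero]
    intro h0
    have : (((Code.of n X).get a) &&& ((Code.of n Y).get b)).testBit i = true := by
      simp [Nat.testBit_and, Code.testBit_of, hi, hX, hY]
    change Nat.testBit (Nat.land _ _) i = true at this
    rw [h0] at this
    simp at this
  simp only [Code.meet, Bool.and_eq_true]
  exact ⟨key 0 0, key 0 1, key 0 2, key 1 0, key 1 1, key 1 2, key 2 0, key 2 1, key 2 2⟩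

lemma Code.of_mem_all {X : ℕ → Fin 3} (h0 : X 0 = 0) (h1 : X 1 = 1) (h2 : X 2 = 2) (k : ℕ) :
    Code.of (k + 3) X ∈ Code.all k := by
  induction k with
  | zero => simp [Code.of, Code.all, Code.ext, h0, h1, h2]
  | succ k ih =>
    refine List.mem_flatMap.2 ⟨_, ih, ?_⟩
    change (Code.of (k + 3) X).ext (k + 3) (X (k + 3)) ∈ _
    generalize X (k + 3) = c
    fin_cases c <;> simp

/-! ### Normal form of two independent columns -/

/-- Up to reordering rows and renaming symbols within columns, `v` and `w` are the normalised columns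
`rowV a` and `rowW b`. The relation `R` assigns to a column its possible codes after this reordering:
`v` and `w` have the codes of the normalised columns, independent columns have meeting codes, and a
column independent of `v` has a code starting with the entries `0, 1, 2`. -/
def Coded (N : ℕ) (a b : Fin 3) (v w : Fin N → Fin 3) : Prop :=
  ∃ R : (Fin N → Fin 3) → Code → Prop, R v (Code.of N (rowV a)) ∧ R w (Code.of N (rowW b)) ∧
    (∀ x y p q, R x p → R y q → QI x y → p.meet q = true) ∧
    ∀ x, QI v x → ∃ p ∈ Code.all (N - 3), R x p

lemma Code.of_congr {n : ℕ} {X Y : ℕ → Fin 3} (h : ∀ i < n, X i = Y i) :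
    Code.of n X = Code.of n Y := by
  induction n with
  | zero => rfl
  | succ n ih => rw [Code.of, Code.of, ih fun i hi => h i (by omega), h n (by omega)]

lemma coded_of_rows {N : ℕ} (hN : 3 ≤ N) {a b : Fin 3} (ha : a ≠ 0) {v w : Fin N → Fin 3}
    (ρ : ℕ → Fin N) (hρ : ∀ r, ∃ i < N, ρ i = r) (π σ : Equiv.Perm (Fin 3))
    (hv : ∀ i < N, π (v (ρ i)) = rowV a i) (hw : ∀ i < N, σ (w (ρ i)) = rowW b i) :
    Coded N a b v w := by
  refine ⟨fun x p => ∃ τ : Equiv.Perm (Fin 3), p = Code.of N fun i => τ (x (ρ i)),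
    ⟨π, (Code.of_congr hv).symm⟩, ⟨σ, (Code.of_congr hw).symm⟩, ?_, ?_⟩
  · rintro x y _ _ ⟨τ, rfl⟩ ⟨τ', rfl⟩ h
    refine Code.meet_of fun c d => ?_
    obtain ⟨r, h1, h2⟩ := h (τ.symm c) (τ'.symm d)
    obtain ⟨i, hi, rfl⟩ := hρ r
    exact ⟨i, hi, by simp [h1], by simp [h2]⟩
  · intro x h
    -- the rows on which `v` has the value coded by `0` are exactly rows `0, 1, 2`
    have hs : Function.Surjective fun k : Fin 3 => x (ρ k) := by
      intro c
      obtain ⟨r, h1, h2⟩ := h (π.symm 0) c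
      obtain ⟨i, hi, rfl⟩ := hρ r
      have h3 := hv i hi
      rw [h1, Equiv.apply_symm_apply] at h3
      have : i < 3 := by
        unfold rowV at h3
        by_contra hi3
        split_ifs at h3 with h4 h5
        · interval_cases i <;> simp [Fin.ext_iff] at h3 hi3
        · exact absurd h3 (by decide)
        · exact ha h3.symm
      exact ⟨⟨i, this⟩, h2⟩
    let τ := Equiv.ofBijective _ (Finite.surjective_iff_bijective.1 hs)
    have hτ : ∀ k : Fin 3, τ.symm (x (ρ k)) = k := fun k => τ.symm_apply_apply k
    obtain ⟨k, rfl⟩ : ∃ k, N = k + 3 := ⟨N - 3, by omega⟩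
    exact ⟨_, Code.of_mem_all (X := fun i => τ.symm (x (ρ i))) (hτ 0) (hτ 1) (hτ 2) k, τ.symm, rfl⟩

lemma exists_rows {N : ℕ} {v w : Fin N → Fin 3} (h : QI v w) :
    ∃ q : Fin 3 × Fin 3 → Fin N, Function.Injective q ∧ ∀ c, v (q c) = c.1 ∧ w (q c) = c.2 := by
  choose q hq using fun c : Fin 3 × Fin 3 => h c.1 c.2
  refine ⟨q, fun c d hcd => ?_, hq⟩
  have h1 := hq c
  rw [hcd, (hq d).1, (hq d).2] at h1
  exact Prod.ext h1.1.symm h1.2.symm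

/-- The nine rows `q` show the nine pairs of symbols in the columns `v` and `w`; the rows `ρ 0` and
`ρ 1` are the others, of which the second is absent if `N = 10`. -/
lemma coded_of_extra {N : ℕ} (hN : N = 10 ∨ N = 11) {v w : Fin N → Fin 3}
    {q : Fin 3 × Fin 3 → Fin N} (hq : ∀ c, v (q c) = c.1 ∧ w (q c) = c.2) (ρ : Fin 2 → Fin N)
    (hρ : ∀ r, (∃ c, q c = r) ∨ r = ρ 0 ∨ (N = 11 ∧ r = ρ 1)) (π σ : Equiv.Perm (Fin 3))
    (h0 : π (v (ρ 0)) = 2 ∧ σ (w (ρ 0)) = 2) (h1 : π (v (ρ 1)) ≠ 0) :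
    Coded N (π (v (ρ 1))) (σ (w (ρ 1))) v w := by
  refine coded_of_rows (by omega) h1
    (fun i => if i < 9 then q (π.symm (Fin.ofNat 3 (i / 3)), σ.symm (Fin.ofNat 3 i))
      else if i = 9 then ρ 0 else ρ 1) ?_ π σ ?_ ?_
  · intro r
    rcases hρ r with ⟨c, rfl⟩ | rfl | ⟨rfl, rfl⟩
    · refine ⟨3 * π c.1 + σ c.2, by omega, ?_⟩
      rw [if_pos (by omega)]
      have e1 : Fin.ofNat 3 ((3 * (π c.1 : ℕ) + (σ c.2 : ℕ)) / 3) = π c.1 := by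
        ext; simp only [Fin.ofNat]; omega
      have e2 : Fin.ofNat 3 (3 * (π c.1 : ℕ) + (σ c.2 : ℕ)) = σ c.2 := by
        ext; simp only [Fin.ofNat]; omega
      rw [e1, e2]; simp
    · exact ⟨9, by omega, by simp⟩
    · exact ⟨10, by omega, by simp⟩
  · intro i _
    unfold rowV
    split_ifs
    · rw [(hq _).1]; simp
    · exact h0.1
    · rfl
  · intro i _
    unfold rowW
    split_ifs
    · rw [(hq _).2]; simp
    · exact h0.2
    · rfl

lemma exists_relabel : ∀ c d : Fin 3, ∃ π : Equiv.Perm (Fin 3), π c = 2 ∧ π d ≠ 0 := by decide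

lemma coded_ten {v w : Fin 10 → Fin 3} (h : QI v w) : Coded 10 2 2 v w := by
  obtain ⟨q, hinj, hq⟩ := exists_rows h
  have hc : (Finset.univ.image q)ᶜ.card = 1 := by
    rw [Finset.card_compl, Finset.card_image_of_injective _ hinj]; simp
  obtain ⟨e, he⟩ := Finset.card_eq_one.1 hc
  obtain ⟨π, hπ, -⟩ := exists_relabel (v e) (v e)
  obtain ⟨σ, hσ, -⟩ := exists_relabel (w e) (w e)
  have := coded_of_extra (.inl rfl) hq (fun _ => e) (fun r => ?_) π σ ⟨hπ, hσ⟩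
    (by rw [hπ]; decide)
  · rwa [hπ, hσ] at this
  · by_cases hr : r ∈ Finset.univ.image q
    · exact .inl (by simpa using hr)
    · rw [← Finset.mem_compl, he, Finset.mem_singleton] at hr
      exact .inr (.inl hr)

lemma coded_eleven {v w : Fin 11 → Fin 3} (h : QI v w) :
    ∃ a b, a ≠ 0 ∧ b ≠ 0 ∧ Coded 11 a b v w := by
  obtain ⟨q, hinj, hq⟩ := exists_rows h
  have hc : (Finset.univ.image q)ᶜ.card = 2 := by
    rw [Finset.card_compl, Finset.card_image_of_injective _ hinj]; simp
  obtain ⟨e, g, -, he⟩ := Finset.card_eq_two.1 hc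
  obtain ⟨π, hπ, hπ'⟩ := exists_relabel (v e) (v g)
  obtain ⟨σ, hσ, hσ'⟩ := exists_relabel (w e) (w g)
  refine ⟨_, _, hπ', hσ', coded_of_extra (.inr rfl) hq ![e, g] (fun r => ?_) π σ ⟨hπ, hσ⟩ hπ'⟩
  by_cases hr : r ∈ Finset.univ.image q
  · exact .inl (by simpa using hr)
  · rw [← Finset.mem_compl, he, Finset.mem_insert, Finset.mem_singleton] at hr
    exact .inr (hr.imp id fun h => ⟨rfl, h⟩)

/-! ### Excluded patterns of independent columns -/

lemma noC5.false {K : List Code} (h : noC5 K = true) {a b c d e : Code} (ha : a ∈ K) (hb : b ∈ K)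
    (hc : c ∈ K) (hd : d ∈ K) (he : e ∈ K) (hab : a.meet b = true) (hbc : b.meet c = true)
    (hcd : c.meet d = true) (hde : d.meet e = true) (hea : e.meet a = true) : False := by
  have h1 := List.all_eq_true.1 (List.all_eq_true.1 h a ha) b hb
  rw [hab, Bool.not_true, Bool.false_or] at h1
  have h2 := List.all_eq_true.1 h1 c hc
  rw [hbc, Bool.not_true, Bool.false_or] at h2
  have h3 := List.all_eq_true.1 h2 d hd
  rw [hcd, Bool.not_true, Bool.false_or] at h3
  have h4 := List.all_eq_true.1 h3 e he
  simp [hde, hea] at h4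

/-- The codes in `codesV N a` meeting both ends of an edge in `codesVW N a b`. -/
def diamondTips (N : ℕ) (a b : Fin 3) : List Code :=
  (codesV N a).filter fun y =>
    (codesVW N a b).any fun r => r.meet y && (codesVW N a b).any fun s => r.meet s && s.meet y

/-- There is no `ConeTri` whose hub `t` has neighbourhood `L` and whose edge `t x` has common
neighbourhood `K`. -/
def noTri (L K : List Code) : Bool :=
  K.all fun a => K.all fun b => !a.meet b || L.all fun i => !(a.meet i && b.meet i) ||
    K.all fun j => !b.meet j || K.all fun l => !a.meet l ||
      L.all fun u => !(i.meet u && (j.meet u && l.meet u))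

lemma noTri.false {L K : List Code} (h : noTri L K = true) {a b i j l u : Code} (ha : a ∈ K)
    (hb : b ∈ K) (hi : i ∈ L) (hj : j ∈ K) (hl : l ∈ K) (hu : u ∈ L) (hab : a.meet b = true)
    (hai : a.meet i = true) (hbi : b.meet i = true) (hbj : b.meet j = true)
    (hal : a.meet l = true) (hiu : i.meet u = true) (hju : j.meet u = true)
    (hlu : l.meet u = true) : False := by
  have h1 := List.all_eq_true.1 (List.all_eq_true.1 h a ha) b hb
  rw [hab, Bool.not_true, Bool.false_or] at h1
  have h2 := List.all_eq_true.1 h1 i hi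
  rw [hai, hbi, Bool.and_true, Bool.not_true, Bool.false_or] at h2
  have h3 := List.all_eq_true.1 h2 j hj
  rw [hbj, Bool.not_true, Bool.false_or] at h3
  have h4 := List.all_eq_true.1 h3 l hl
  rw [hal, Bool.not_true, Bool.false_or] at h4
  have h5 := List.all_eq_true.1 h4 u hu
  simp [hiu, hju, hlu] at h5

lemma noC5_ten : noC5 (codesVW 10 2 2) = true := by decide +kernel

lemma noTri_ten : noTri (codesV 10 2) (codesVW 10 2 2) = true := by decide +kernel

lemma diamondTips_ten : ((diamondTips 10 2 2).all fun y => (diamondTips 10 2 2).all fun z =>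
    !y.meet z) = true := by decide +kernel

lemma noC5_eleven : ∀ a b : Fin 3, a ≠ 0 → b ≠ 0 →
    ((codesVW 11 a b).all fun x => noC5 ((codesVW 11 a b).filter x.meet)) = true := by
  decide +kernel

lemma mem_codesV {N : ℕ} {a : Fin 3} {p : Code} (hp : p ∈ Code.all (N - 3))
    (h : (Code.of N (rowV a)).meet p = true) : p ∈ codesV N a := List.mem_filter.2 ⟨hp, h⟩

lemma mem_codesVW {N : ℕ} {a b : Fin 3} {p : Code} (hp : p ∈ codesV N a)
    (h : (Code.of N (rowW b)).meet p = true) : p ∈ codesVW N a b := List.mem_filter.2 ⟨hp, h⟩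

lemma Coded.exists_code {N : ℕ} {a b : Fin 3} {v w : Fin N → Fin 3} (h : Coded N a b v w) :
    ∃ R : (Fin N → Fin 3) → Code → Prop,
      (∀ x y p q, R x p → R y q → QI x y → p.meet q = true) ∧
      (∀ x, QI v x → ∃ p ∈ codesV N a, R x p) ∧
      ∀ x, QI v x → QI w x → ∃ p ∈ codesVW N a b, R x p := by
  obtain ⟨R, hv, hw, hm, hx⟩ := h
  refine ⟨R, hm, fun x h1 => ?_, fun x h1 h2 => ?_⟩ <;> obtain ⟨p, hp, hR⟩ := hx x h1
  · exact ⟨p, mem_codesV hp (hm _ _ _ _ hv hR h1), hR⟩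
  · exact ⟨p, mem_codesVW (mem_codesV hp (hm _ _ _ _ hv hR h1)) (hm _ _ _ _ hw hR h2), hR⟩

lemma not_coneC5_QI : ¬ ConeC5 (QI : (Fin 10 → Fin 3) → (Fin 10 → Fin 3) → Prop) := by
  rintro ⟨v, w, x₀, x₁, x₂, x₃, x₄, hvw, ⟨v0, v1, v2, v3, v4⟩, ⟨w0, w1, w2, w3, w4⟩,
    h01, h12, h23, h34, h40⟩
  obtain ⟨R, hm, -, hK⟩ := (coded_ten hvw).exists_code
  obtain ⟨p0, k0, r0⟩ := hK _ v0 w0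
  obtain ⟨p1, k1, r1⟩ := hK _ v1 w1
  obtain ⟨p2, k2, r2⟩ := hK _ v2 w2
  obtain ⟨p3, k3, r3⟩ := hK _ v3 w3
  obtain ⟨p4, k4, r4⟩ := hK _ v4 w4
  exact noC5.false noC5_ten k0 k1 k2 k3 k4 (hm _ _ _ _ r0 r1 h01) (hm _ _ _ _ r1 r2 h12)
    (hm _ _ _ _ r2 r3 h23) (hm _ _ _ _ r3 r4 h34) (hm _ _ _ _ r4 r0 h40)

lemma not_coneMoser_QI : ¬ ConeMoser (QI : (Fin 10 → Fin 3) → (Fin 10 → Fin 3) → Prop) := by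
  rintro ⟨t, x, a, b, y, c, d, z, ⟨tx, ta, tb, ty, tc, td, tz⟩, ⟨xa, xb, ab, ay, yb⟩,
    ⟨xc, xd, cd, cz, dz⟩, yz⟩
  obtain ⟨R, hm, hL, hK⟩ := (coded_ten tx).exists_code
  -- common neighbours of an edge in the common neighbourhood of `t` and `x` have codes among the tips
  have tip : ∀ a b y, QI t a → QI t b → QI t y → QI x a → QI x b → QI a b → QI a y → QI b y →
      ∃ p ∈ diamondTips 10 2 2, R y p := by
    intro a b y ta tb ty xa xb ab ay yb
    obtain ⟨p, hp, rp⟩ := hL y ty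
    obtain ⟨q, hq, rq⟩ := hK a ta xa
    obtain ⟨s, hs, rs⟩ := hK b tb xb
    refine ⟨p, List.mem_filter.2 ⟨hp, List.any_eq_true.2 ⟨q, hq, ?_⟩⟩, rp⟩
    rw [hm _ _ _ _ rq rp ay, Bool.true_and]
    refine List.any_eq_true.2 ⟨s, hs, ?_⟩
    rw [hm _ _ _ _ rq rs ab, hm _ _ _ _ rs rp yb, Bool.true_and]
  obtain ⟨p, hp, rp⟩ := tip a b y ta tb ty xa xb ab ay yb
  obtain ⟨q, hq, rq⟩ := tip c d z tc td tz xc xd cd cz dz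
  have := List.all_eq_true.1 (List.all_eq_true.1 diamondTips_ten p hp) q hq
  simp [hm _ _ _ _ rp rq yz] at this

lemma not_coneTri_QI : ¬ ConeTri (QI : (Fin 10 → Fin 3) → (Fin 10 → Fin 3) → Prop) := by
  rintro ⟨t, x, a, b, i, j, l, u, ⟨tx, ta, tb, ti, tj, tl, tu⟩, ⟨xa, xb, ab⟩, ⟨ai, bi⟩,
    ⟨xj, bj⟩, ⟨xl, al⟩, iu, ju, lu⟩
  obtain ⟨R, hm, hL, hK⟩ := (coded_ten tx).exists_code
  obtain ⟨pa, ka, ra⟩ := hK _ ta xa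
  obtain ⟨pb, kb, rb⟩ := hK _ tb xb
  obtain ⟨pi, ki, ri⟩ := hL _ ti
  obtain ⟨pj, kj, rj⟩ := hK _ tj xj
  obtain ⟨pl, kl, rl⟩ := hK _ tl xl
  obtain ⟨pu, ku, ru⟩ := hL _ tu
  exact noTri.false noTri_ten ka kb ki kj kl ku (hm _ _ _ _ ra rb ab) (hm _ _ _ _ ra ri ai)
    (hm _ _ _ _ rb ri bi) (hm _ _ _ _ rb rj bj) (hm _ _ _ _ ra rl al) (hm _ _ _ _ ri ru iu)
    (hm _ _ _ _ rj ru ju) (hm _ _ _ _ rl ru lu)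

lemma not_tripleC5_QI : ¬ TripleC5 (QI : (Fin 11 → Fin 3) → (Fin 11 → Fin 3) → Prop) := by
  rintro ⟨u, v, w, x₀, x₁, x₂, x₃, x₄, ⟨huv, huw, hvw⟩, ⟨u0, u1, u2, u3, u4⟩,
    ⟨v0, v1, v2, v3, v4⟩, ⟨w0, w1, w2, w3, w4⟩, h01, h12, h23, h34, h40⟩
  obtain ⟨a, b, ha, hb, hc⟩ := coded_eleven huv
  obtain ⟨R, hm, -, hK⟩ := hc.exists_code
  obtain ⟨pw, kw, rpw⟩ := hK _ huw hvw
  have hK' : ∀ x, QI u x → QI v x → QI w x → ∃ p ∈ (codesVW 11 a b).filter pw.meet, R x p := by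
    intro x h1 h2 h3
    obtain ⟨p, kp, rp⟩ := hK x h1 h2
    exact ⟨p, List.mem_filter.2 ⟨kp, hm _ _ _ _ rpw rp h3⟩, rp⟩
  obtain ⟨p0, k0, r0⟩ := hK' _ u0 v0 w0
  obtain ⟨p1, k1, r1⟩ := hK' _ u1 v1 w1
  obtain ⟨p2, k2, r2⟩ := hK' _ u2 v2 w2
  obtain ⟨p3, k3, r3⟩ := hK' _ u3 v3 w3
  obtain ⟨p4, k4, r4⟩ := hK' _ u4 v4 w4
  exact noC5.false (List.all_eq_true.1 (noC5_eleven a b ha hb) pw kw) k0 k1 k2 k3 k4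
    (hm _ _ _ _ r0 r1 h01) (hm _ _ _ _ r1 r2 h12) (hm _ _ _ _ r2 r3 h23)
    (hm _ _ _ _ r3 r4 h34) (hm _ _ _ _ r4 r0 h40)

/-! ### From columns to colourings -/

lemma ConeC5.map {α β : Type*} {r : α → α → Prop} {s : β → β → Prop} (f : α → β)
    (H : ∀ x y, r x y → s (f x) (f y)) : ConeC5 r → ConeC5 s := by
  rintro ⟨v, w, x₀, x₁, x₂, x₃, x₄, h⟩
  refine ⟨f v, f w, f x₀, f x₁, f x₂, f x₃, f x₄, ?_⟩
  casesm* _ ∧ _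
  constructorm* _ ∧ _ <;> apply H <;> assumption

lemma ConeMoser.map {α β : Type*} {r : α → α → Prop} {s : β → β → Prop} (f : α → β)
    (H : ∀ x y, r x y → s (f x) (f y)) : ConeMoser r → ConeMoser s := by
  rintro ⟨t, x, a, b, y, c, d, z, h⟩
  refine ⟨f t, f x, f a, f b, f y, f c, f d, f z, ?_⟩
  casesm* _ ∧ _
  constructorm* _ ∧ _ <;> apply H <;> assumption

lemma ConeTri.map {α β : Type*} {r : α → α → Prop} {s : β → β → Prop} (f : α → β)
    (H : ∀ x y, r x y → s (f x) (f y)) : ConeTri r → ConeTri s := by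
  rintro ⟨t, x, a, b, i, j, l, u, h⟩
  refine ⟨f t, f x, f a, f b, f i, f j, f l, f u, ?_⟩
  casesm* _ ∧ _
  constructorm* _ ∧ _ <;> apply H <;> assumption

lemma TripleC5.map {α β : Type*} {r : α → α → Prop} {s : β → β → Prop} (f : α → β)
    (H : ∀ x y, r x y → s (f x) (f y)) : TripleC5 r → TripleC5 s := by
  rintro ⟨u, v, w, x₀, x₁, x₂, x₃, x₄, h⟩
  refine ⟨f u, f v, f w, f x₀, f x₁, f x₂, f x₃, f x₄, ?_⟩
  casesm* _ ∧ _
  constructorm* _ ∧ _ <;> apply H <;> assumption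

/-- The columns of a Pauli set with at most `N` elements, listed as the rows of an array with `N`
rows: adding isolated vertices to reach eight, adjacent vertices get qualitatively independent
columns. -/
lemma exists_columns {n N : ℕ} (hn : n ≤ 8) {G : SimpleGraph (Fin n)} {S : Finset (Fin n → Fin 3)}
    (hS : IsPauliSet G S) (hN : S.card ≤ N) :
    ∃ col : Fin 8 → Fin N → Fin 3, ∀ i j, (G.map (Fin.castLEEmb hn)).Adj i j →
      QI (col i) (col j) := by
  let F : Fin N → Fin n → Fin 3 := fun r => S.toList.getD r fun _ => 0
  refine ⟨fun i r => if h : i.1 < n then F r ⟨i, h⟩ else 0, ?_⟩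
  intro i j h a b
  obtain ⟨i, j, hij, rfl, rfl⟩ := (SimpleGraph.map_adj _ _ _ _).1 h
  obtain ⟨f, hf, h1, h2⟩ := hS i j hij a b
  obtain ⟨r, hr, hrf⟩ := List.mem_iff_getElem.1 (Finset.mem_toList.2 hf)
  have hr' : r < N := lt_of_lt_of_le (by simpa using hr) hN
  have hF : F ⟨r, hr'⟩ = f := (List.getD_eq_getElem _ _ hr).trans hrf
  exact ⟨⟨r, hr'⟩, by simp [hF, h1], by simp [hF, h2]⟩

lemma colorable_four_of_card_le {n : ℕ} (hn : n ≤ 8) {G : SimpleGraph (Fin n)}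
    {S : Finset (Fin n → Fin 3)} (hS : IsPauliSet G S) (hc : S.card ≤ 10) : G.Colorable 4 := by
  obtain ⟨col, hcol⟩ := exists_columns hn hS hc
  have := colorable_four (G := G.map (Fin.castLEEmb hn))
    (fun h => not_coneC5_QI (h.map col hcol)) (fun h => not_coneMoser_QI (h.map col hcol))
    (fun h => not_coneTri_QI (h.map col hcol))
  exact this.of_hom (SimpleGraph.Embedding.map (Fin.castLEEmb hn) G).toHom

lemma colorable_five_of_card_le {n : ℕ} (hn : n ≤ 8) {G : SimpleGraph (Fin n)}
    {S : Finset (Fin n → Fin 3)} (hS : IsPauliSet G S) (hc : S.card ≤ 11) : G.Colorable 5 := by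
  obtain ⟨col, hcol⟩ := exists_columns hn hS hc
  have := colorable_five (G := G.map (Fin.castLEEmb hn))
    (fun h => not_tripleC5_QI (h.map col hcol))
  exact this.of_hom (SimpleGraph.Embedding.map (Fin.castLEEmb hn) G).toHom

/-! ### Pauli sets and covering arrays -/

lemma phi2G_le {V : Type*} {G : SimpleGraph V} {S : Finset (V → Fin 3)} (hS : IsPauliSet G S) :
    phi2G G ≤ S.card := Nat.sInf_le ⟨S, rfl, hS⟩

lemma exists_phi2G {V : Type*} [Fintype V] [DecidableEq V] (G : SimpleGraph V) :
    ∃ S : Finset (V → Fin 3), S.card = phi2G G ∧ IsPauliSet G S := by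
  refine Nat.sInf_mem (s := {N : ℕ | ∃ S : Finset (V → Fin 3), S.card = N ∧ IsPauliSet G S})
    ⟨_, Finset.univ, rfl, fun i j hij a b => ⟨fun k => if k = i then a else b, by simp, by simp, ?_⟩⟩
  simp [hij.ne.symm]

/-- Pulling back along a graph homomorphism turns Pauli sets into Pauli sets. Applied to a
colouring, this is the colouring construction. -/
lemma phi2G_le_of_hom {V W : Type*} [Fintype W] [DecidableEq W] {G : SimpleGraph V}
    {H : SimpleGraph W} (φ : G →g H) : phi2G G ≤ phi2G H := by
  classical
  obtain ⟨S, hc, hS⟩ := exists_phi2G H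
  rw [← hc]
  refine (phi2G_le (S := S.image (· ∘ φ)) fun i j hij a b => ?_).trans Finset.card_image_le
  obtain ⟨f, hf, h1, h2⟩ := hS _ _ (φ.map_adj hij) a b
  exact ⟨f ∘ φ, Finset.mem_image_of_mem _ hf, h1, h2⟩

lemma phi2_mono {c d : ℕ} (h : c ≤ d) : phi2 c ≤ phi2 d :=
  phi2G_le_of_hom (SimpleGraph.Embedding.completeGraph (Fin.castLEEmb h)).toHom

/-- The rows of a covering array of strength two form a Pauli set of the complete graph. -/
lemma phi2_le_of_array {N k : ℕ} (A : Fin N → Fin k → Fin 3)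
    (hA : ∀ i j, i ≠ j → ∀ a b, ∃ r, A r i = a ∧ A r j = b) : phi2 k ≤ N := by
  refine (phi2G_le (S := Finset.univ.image A) fun i j hij a b => ?_).trans
    (Finset.card_image_le.trans (by simp))
  obtain ⟨r, h1, h2⟩ := hA i j hij.ne a b
  exact ⟨A r, by simp, h1, h2⟩

lemma phi2_four_le : phi2 4 ≤ 9 :=
  phi2_le_of_array ![![0, 0, 0, 0], ![0, 1, 1, 1], ![0, 2, 2, 2], ![1, 0, 1, 2], ![1, 1, 2, 0],
    ![1, 2, 0, 1], ![2, 0, 2, 1], ![2, 1, 0, 2], ![2, 2, 1, 0]] (by decide +kernel)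

lemma phi2_five_le : phi2 5 ≤ 11 :=
  phi2_le_of_array ![![0, 0, 0, 0, 0], ![0, 1, 1, 1, 1], ![0, 2, 2, 2, 2], ![1, 0, 2, 1, 2],
    ![1, 1, 2, 0, 1], ![1, 2, 0, 1, 1], ![2, 0, 1, 2, 1], ![2, 1, 2, 1, 0], ![2, 2, 1, 0, 2],
    ![1, 2, 1, 2, 0], ![2, 1, 0, 2, 2]] (by decide +kernel)

lemma phi2_seven_le : phi2 7 ≤ 12 :=
  phi2_le_of_array ![![0, 1, 0, 1, 0, 1, 2], ![2, 0, 0, 0, 0, 2, 1], ![2, 2, 2, 0, 1, 1, 2],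
    ![1, 2, 1, 1, 0, 1, 1], ![2, 1, 2, 1, 2, 0, 1], ![0, 2, 2, 2, 0, 0, 0],
    ![0, 0, 1, 0, 2, 0, 2], ![0, 1, 1, 2, 1, 2, 1], ![1, 2, 0, 2, 2, 2, 2],
    ![1, 0, 2, 1, 1, 2, 0], ![1, 1, 0, 0, 1, 0, 0], ![2, 0, 1, 2, 2, 1, 0]] (by decide +kernel)

/-- A single edge already needs all nine pairs of values. -/
lemma nine_le_card {V : Type*} {G : SimpleGraph V} {S : Finset (V → Fin 3)} (hS : IsPauliSet G S)
    {i j : V} (hij : G.Adj i j) : 9 ≤ S.card := by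
  have : (Finset.univ : Finset (Fin 3 × Fin 3)).card ≤ S.card :=
    Finset.card_le_card_of_surjOn (fun f => (f i, f j)) fun c _ => by
      obtain ⟨f, hf, h1, h2⟩ := hS i j hij c.1 c.2
      exact ⟨f, hf, Prod.ext h1 h2⟩
  simpa using this

/-- Two non-adjacent vertices may share a colour. -/
lemma colorable_seven_of_ne_top {G : SimpleGraph (Fin 8)} (h : G ≠ ⊤) : G.Colorable 7 := by
  obtain ⟨i, j, hij, hG⟩ := SimpleGraph.ne_top_iff_exists_not_adj.1 h
  let C : G.Coloring {x // x ≠ j} := SimpleGraph.Coloring.mk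
    (fun x => if hx : x = j then ⟨i, hij⟩ else ⟨x, hx⟩) (by
      intro x y hxy hc
      have := hxy.ne
      have := hxy.symm
      split_ifs at hc <;> simp_all)
  simpa using C.colorable

/-- Every connected simple graph on at most 8 vertices with at least one edge
satisfies `φ₂(G) = φ₂(χ(G))`: the graph-colouring construction for two-body partial
tomography yields a minimal Pauli set. -/
theorem phi2G_eq_phi2_chromaticNumber (n : ℕ) (hn : n ≤ 8) (G : SimpleGraph (Fin n))
    (hconn : G.Connected) (hedge : ∃ i j : Fin n, G.Adj i j) :
    ∀ c : ℕ, G.chromaticNumber = (c : ℕ∞) → phi2G G = phi2 c := by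
  intro c hc
  have hcol : G.Colorable c := SimpleGraph.chromaticNumber_le_iff_colorable.1 hc.le
  have hmin : ∀ k, G.Colorable k → c ≤ k := fun k hk => by
    have := SimpleGraph.chromaticNumber_le_iff_colorable.2 hk
    rw [hc] at this
    exact_mod_cast this
  refine le_antisymm (phi2G_le_of_hom hcol.some) ?_
  obtain ⟨S, hcard, hS⟩ := exists_phi2G G
  rw [← hcard]
  obtain ⟨i, j, hij⟩ := hedge
  have hcn : c ≤ n := hmin n (by simpa using G.selfColoring.colorable)
  rcases Nat.lt_or_ge 4 c with h4 | h4
  swap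
  · exact ((phi2_mono h4).trans phi2_four_le).trans (nine_le_card hS hij)
  have h11 : 11 ≤ S.card := by
    by_contra h
    have := hmin 4 (colorable_four_of_card_le hn hS (by omega))
    omega
  rcases Nat.lt_or_ge 5 c with h5 | h5
  swap
  · exact ((phi2_mono h5).trans phi2_five_le).trans h11
  have h12 : 12 ≤ S.card := by
    by_contra h
    have := hmin 5 (colorable_five_of_card_le hn hS (by omega))
    omega
  rcases Nat.lt_or_ge 7 c with h7 | h7
  swap
  · exact ((phi2_mono h7).trans phi2_seven_le).trans h12
  obtain rfl : c = 8 := by omega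
  obtain rfl : n = 8 := by omega
  have hG : G = ⊤ := by
    by_contra h
    have := hmin 7 (colorable_seven_of_ne_top h)
    omega
  subst hG
  exact hcard.ge
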